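/- arXiv:2208.07030 — 2 statements merged into one kernel-verified Lean document; each statement's English description precedes it below -/
import Mathlib

section
/- Assume ΣT = 0. Then K(T,T|T) = Π(T); for every t ∈ [t0,T], K(t,t|T) = Π(t) - Π(t) Λ(t,t|T) Π(t); and the difference Π(t) - K(t,t|T) = Π(t)Λ(t,t|T)Π(t) is positive semidefinite, i.e. K(t,t|T) ⪯ Π(t) in the Loewner order. -/
/-!
Write `V = G Q Gᵀ`, `W = Hᵀ R⁻¹ H`, `A = F - VΣ`, `B = F - ΠW`, and let `Φ(t) = Φ_{F,Σ}(t,t₀)` and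
`Ω(t) = Φ_{F,Π}(t,t₀)` be the two closed-loop flows. Everything is driven by the product
`M = 1 + ΠΣ` and its transpose `N = 1 + ΣΠ` (`Σ` and `Π` are symmetric, `fwd_riccati_symm` and
`back_riccati_symm`).

* The Riccati equations give `M' = B M - M A`, so `M Φ = Ω M(t₀)` (`intertwine`). Since
  `Σ(T) = 0`, `M(T) = 1`, hence `M(t₀) = Ω(T)⁻¹ Φ(T)` is invertible, and so is every `M(t)`
  (`isUnit_one_add_mul`). In particular the inverse occurring in the kernel `K` is a true inverse.
* `t ↦ K(t,t|T)` solves the Lyapunov equation `K' = A K + K Aᵀ + V` (`lyapunov_rep`), with initial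
  value `Π₀ (1 + Σ(t₀) Π₀)⁻¹` (`init_mul_eq`). Both `K N - Π` and `0` solve
  `X' = A X + X Bᵀ` with the same initial value, so `K N = Π` (`lyapunov_mul_eq`).
* `(Ωᵀ Σ Φ)' = -Ωᵀ W M Φ = -Ωᵀ W Ω M(t₀)` and `Ωᵀ Σ Φ` vanishes at `T`; integrating gives the
  information Gramian (`gramian_mul`), which in terms of the kernel reads `Λ M = Σ`.
* Algebra concludes (`eq_sub_of_mul_eq`): as `Π N = M Π`, we get
  `(Π - ΠΛΠ) N = Π + ΠΣΠ - ΠΛMΠ = Π = K N`, and `N` is invertible. At `T`, `N = 1` gives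
  `K(T,T|T) = Π(T)`; and `ΠΛΠ` is positive semidefinite because `Λ` is an integral of
  positive semidefinite matrices.

The coefficients are only integrable, so all differential equations are understood in the
Carathéodory sense, and the statements about derivatives above are statements about the relation
`MPrim X X'`: `X` is an indefinite integral of the integrable function `X'`. The product rule for
this relation comes from Mathlib's absolutely continuous functions, and uniqueness for linear
equations (`MPrim.eq_zero_of_linear`) from Grönwall's inequality with an integrable rate.
-/

open MeasureTheory Matrix Set Filter

noncomputable section

namespace SDEKernels

/-- Entrywise interval integral of a matrix-valued function. -/
def matInt {ι κ : Type*} (X : ℝ → Matrix ι κ ℝ) (a b : ℝ) : Matrix ι κ ℝ :=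
  Matrix.of fun i j => ∫ τ in a..b, X τ i j

/-- Entrywise continuity of a matrix-valued function on a set. -/
def MatContOn {ι κ : Type*} (X : ℝ → Matrix ι κ ℝ) (s : Set ℝ) : Prop :=
  ∀ i j, ContinuousOn (fun t => X t i j) s

/-- Entrywise interval integrability (matrix-valued `L¹` on `[a,b]`). -/
def MatII {ι κ : Type*} (X : ℝ → Matrix ι κ ℝ) (a b : ℝ) : Prop :=
  ∀ i j, IntervalIntegrable (fun t => X t i j) volume a b

/-- Entrywise square integrability (matrix-valued `L²` on `[a,b]`). -/
def MatL2 {ι κ : Type*} (X : ℝ → Matrix ι κ ℝ) (a b : ℝ) : Prop :=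
  ∀ i j, IntervalIntegrable (fun t => X t i j) volume a b ∧
    IntervalIntegrable (fun t => (X t i j) ^ 2) volume a b

/-- Componentwise square integrability (vector-valued `L²` on `[a,b]`). -/
def VecL2 {ι : Type*} (x : ℝ → ι → ℝ) (a b : ℝ) : Prop :=
  ∀ i, IntervalIntegrable (fun t => x t i) volume a b ∧
    IntervalIntegrable (fun t => (x t i) ^ 2) volume a b

/-- `G(τ) Q(τ) G(τ)*`. -/
def gqg {n d : ℕ} (G : ℝ → Matrix (Fin n) (Fin d) ℝ) (Q : ℝ → Matrix (Fin d) (Fin d) ℝ)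
    (τ : ℝ) : Matrix (Fin n) (Fin n) ℝ := G τ * Q τ * (G τ)ᵀ

/-- `H(τ)* R(τ)⁻¹ H(τ)`. -/
def hrh {n m : ℕ} (H : ℝ → Matrix (Fin m) (Fin n) ℝ) (R : ℝ → Matrix (Fin m) (Fin m) ℝ)
    (τ : ℝ) : Matrix (Fin n) (Fin n) ℝ := (H τ)ᵀ * (R τ)⁻¹ * H τ

/-- `Φ` is the state-transition matrix of `x' = A(s) x` on `[a,b]`, in the
Carathéodory (integral) sense: `Φ(t,t) = I` and `∂ₛ Φ(s,t) = A(s) Φ(s,t)`. -/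
def IsTransition {ι : Type*} [Fintype ι] [DecidableEq ι] (a b : ℝ)
    (A : ℝ → Matrix ι ι ℝ) (Φ : ℝ → ℝ → Matrix ι ι ℝ) : Prop :=
  ∀ t ∈ Icc a b,
    MatContOn (fun s => Φ s t) (Icc a b) ∧
    MatII (fun τ => A τ * Φ τ t) a b ∧
    ∀ s ∈ Icc a b, Φ s t = 1 + matInt (fun τ => A τ * Φ τ t) t s

/-- Carathéodory solution of the backward matrix Riccati equation
`-Σ' = ΣF + F*Σ - Σ G Q G* Σ + H* R⁻¹ H`, `Σ(b) = ST`, on `[a,b]`. -/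
def SolvesBackRiccati {n m d : ℕ} (a b : ℝ) (F : ℝ → Matrix (Fin n) (Fin n) ℝ)
    (G : ℝ → Matrix (Fin n) (Fin d) ℝ) (Q : ℝ → Matrix (Fin d) (Fin d) ℝ)
    (H : ℝ → Matrix (Fin m) (Fin n) ℝ) (R : ℝ → Matrix (Fin m) (Fin m) ℝ)
    (ST : Matrix (Fin n) (Fin n) ℝ) (S : ℝ → Matrix (Fin n) (Fin n) ℝ) : Prop :=
  MatContOn S (Icc a b) ∧
  MatII (fun τ => S τ * F τ + (F τ)ᵀ * S τ - S τ * gqg G Q τ * S τ + hrh H R τ) a b ∧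
  S b = ST ∧
  ∀ t ∈ Icc a b,
    S t = ST + matInt (fun τ => S τ * F τ + (F τ)ᵀ * S τ - S τ * gqg G Q τ * S τ + hrh H R τ) t b

/-- Carathéodory solution of the forward matrix Riccati equation
`Π' = FΠ + ΠF* - Π H* R⁻¹ H Π + G Q G*`, `Π(a) = P0`, on `[a,b]`. -/
def SolvesFwdRiccati {n m d : ℕ} (a b : ℝ) (F : ℝ → Matrix (Fin n) (Fin n) ℝ)
    (G : ℝ → Matrix (Fin n) (Fin d) ℝ) (Q : ℝ → Matrix (Fin d) (Fin d) ℝ)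
    (H : ℝ → Matrix (Fin m) (Fin n) ℝ) (R : ℝ → Matrix (Fin m) (Fin m) ℝ)
    (P0 : Matrix (Fin n) (Fin n) ℝ) (P : ℝ → Matrix (Fin n) (Fin n) ℝ) : Prop :=
  MatContOn P (Icc a b) ∧
  MatII (fun τ => F τ * P τ + P τ * (F τ)ᵀ - P τ * hrh H R τ * P τ + gqg G Q τ) a b ∧
  P a = P0 ∧
  ∀ t ∈ Icc a b,
    P t = P0 + matInt (fun τ => F τ * P τ + P τ * (F τ)ᵀ - P τ * hrh H R τ * P τ + gqg G Q τ) a t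

/-- Carathéodory solution of the perturbed two-point boundary value problem
`μ' = Fμ - GQG*ν + lμ`, `-ν' = F*ν + H*R⁻¹Hμ - lν`, `μ(a) = -P0 ν(a)`, `ν(b) = ST μ(b)`. -/
def SolvesTPBVP {n m d : ℕ} (a b : ℝ) (F : ℝ → Matrix (Fin n) (Fin n) ℝ)
    (G : ℝ → Matrix (Fin n) (Fin d) ℝ) (Q : ℝ → Matrix (Fin d) (Fin d) ℝ)
    (H : ℝ → Matrix (Fin m) (Fin n) ℝ) (R : ℝ → Matrix (Fin m) (Fin m) ℝ)
    (P0 ST : Matrix (Fin n) (Fin n) ℝ) (lμ lν : ℝ → Fin n → ℝ)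
    (μ ν : ℝ → Fin n → ℝ) : Prop :=
  ContinuousOn μ (Icc a b) ∧ ContinuousOn ν (Icc a b) ∧
  IntervalIntegrable (fun τ => (F τ).mulVec (μ τ) - (gqg G Q τ).mulVec (ν τ) + lμ τ) volume a b ∧
  IntervalIntegrable (fun τ => (F τ)ᵀ.mulVec (ν τ) + (hrh H R τ).mulVec (μ τ) - lν τ) volume a b ∧
  (∀ t ∈ Icc a b,
    μ t = μ a + ∫ τ in a..t, ((F τ).mulVec (μ τ) - (gqg G Q τ).mulVec (ν τ) + lμ τ)) ∧
  (∀ t ∈ Icc a b,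
    ν t = ν b + ∫ τ in t..b, ((F τ)ᵀ.mulVec (ν τ) + (hrh H R τ).mulVec (μ τ) - lν τ)) ∧
  μ a = -(P0.mulVec (ν a)) ∧
  ν b = ST.mulVec (μ b)

/-- The trajectory kernel `K(s,t|T)`. -/
def Kker {n d : ℕ} (t0 : ℝ) (G : ℝ → Matrix (Fin n) (Fin d) ℝ)
    (Q : ℝ → Matrix (Fin d) (Fin d) ℝ) (PhiFS : ℝ → ℝ → Matrix (Fin n) (Fin n) ℝ)
    (S : ℝ → Matrix (Fin n) (Fin n) ℝ) (P0h : Matrix (Fin n) (Fin n) ℝ)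
    (s t : ℝ) : Matrix (Fin n) (Fin n) ℝ :=
  PhiFS s t0 * P0h * (1 + P0h * S t0 * P0h)⁻¹ * P0h * (PhiFS t t0)ᵀ +
    matInt (fun τ => PhiFS s τ * gqg G Q τ * (PhiFS t τ)ᵀ) t0 (min s t)

/-- The information kernel `Λ(s,t|T)`. -/
def Lker {n m : ℕ} (T : ℝ) (H : ℝ → Matrix (Fin m) (Fin n) ℝ)
    (R : ℝ → Matrix (Fin m) (Fin m) ℝ) (PhiFP : ℝ → ℝ → Matrix (Fin n) (Fin n) ℝ)
    (P : ℝ → Matrix (Fin n) (Fin n) ℝ) (STh : Matrix (Fin n) (Fin n) ℝ)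
    (s t : ℝ) : Matrix (Fin n) (Fin n) ℝ :=
  (PhiFP T s)ᵀ * STh * (1 + STh * P T * STh)⁻¹ * STh * PhiFP T t +
    matInt (fun τ => (PhiFP τ s)ᵀ * hrh H R τ * PhiFP τ t) (max s t) T


/-- Carathéodory solution of the forward linear ODE `x' = A(τ) x` (vector-valued). -/
def SolvesLinFwd {n : ℕ} (a b : ℝ) (A : ℝ → Matrix (Fin n) (Fin n) ℝ)
    (x : ℝ → Fin n → ℝ) : Prop :=
  ContinuousOn x (Icc a b) ∧
  IntervalIntegrable (fun τ => (A τ).mulVec (x τ)) volume a b ∧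
  ∀ t ∈ Icc a b, x t = x a + ∫ τ in a..t, (A τ).mulVec (x τ)

/-- Carathéodory solution of the backward linear ODE `-χ' = F(σ)* χ` on `[a,c]`
with terminal value `χ(c) = z`. -/
def SolvesChi {n : ℕ} (a c : ℝ) (F : ℝ → Matrix (Fin n) (Fin n) ℝ) (z : Fin n → ℝ)
    (χ : ℝ → Fin n → ℝ) : Prop :=
  ContinuousOn χ (Icc a c) ∧
  IntervalIntegrable (fun σ => (F σ)ᵀ.mulVec (χ σ)) volume a c ∧
  χ c = z ∧
  ∀ τ ∈ Icc a c, χ τ = z + ∫ σ in τ..c, (F σ)ᵀ.mulVec (χ σ)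

/-- Carathéodory solution of the impulse-response two-point boundary value problem at `t`:
`x' = Fx - GQG*q + GQG*χ·1_{τ<t}`, `-q' = F*q + H*R⁻¹Hx`,
`x(a) = -P0 q(a) + P0 χ(a)`, `q(b) = ST x(b)`. -/
def SolvesImpulseSystem {n m d : ℕ} (a b t : ℝ) (F : ℝ → Matrix (Fin n) (Fin n) ℝ)
    (G : ℝ → Matrix (Fin n) (Fin d) ℝ) (Q : ℝ → Matrix (Fin d) (Fin d) ℝ)
    (H : ℝ → Matrix (Fin m) (Fin n) ℝ) (R : ℝ → Matrix (Fin m) (Fin m) ℝ)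
    (P0 ST : Matrix (Fin n) (Fin n) ℝ) (χ x q : ℝ → Fin n → ℝ) : Prop :=
  ContinuousOn x (Icc a b) ∧ ContinuousOn q (Icc a b) ∧
  IntervalIntegrable (fun τ => (F τ).mulVec (x τ) - (gqg G Q τ).mulVec (q τ) +
    (if τ < t then (gqg G Q τ).mulVec (χ τ) else 0)) volume a b ∧
  IntervalIntegrable (fun τ => (F τ)ᵀ.mulVec (q τ) + (hrh H R τ).mulVec (x τ)) volume a b ∧
  (∀ s ∈ Icc a b, x s = x a + ∫ τ in a..s, ((F τ).mulVec (x τ) - (gqg G Q τ).mulVec (q τ) +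
    (if τ < t then (gqg G Q τ).mulVec (χ τ) else 0))) ∧
  (∀ s ∈ Icc a b, q s = q b + ∫ τ in s..b, ((F τ)ᵀ.mulVec (q τ) + (hrh H R τ).mulVec (x τ))) ∧
  x a = -(P0.mulVec (q a)) + P0.mulVec (χ a) ∧
  q b = ST.mulVec (x b)

/-- Right-hand side of the adjoint equation `-λ' = F*λ + H*R⁻¹H γ`. -/
def hamRHS {n m : ℕ} (F : ℝ → Matrix (Fin n) (Fin n) ℝ)
    (H : ℝ → Matrix (Fin m) (Fin n) ℝ) (R : ℝ → Matrix (Fin m) (Fin m) ℝ)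
    (gam lam : ℝ → Fin n → ℝ) (τ : ℝ) : Fin n → ℝ :=
  (F τ)ᵀ.mulVec (lam τ) + (hrh H R τ).mulVec (gam τ)

/-- Carathéodory solution `(γ, λ)` of the Hamiltonian system with a jump of size `lamb` at `s`
(and terminal condition appropriate to `ΣT = 0`):
`γ' = Fγ - GQG*λ`, `-λ' = F*λ + H*R⁻¹Hγ` on `[t0,s)` and `(s,T]`, `γ(t0) = -Π0 λ(t0)`,
`λ(T) = 0` if `s < T` (`λ(T) = lamb` if `s = T`), and `λ(s) - λ(s⁺) = lamb` if `s < T`. -/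
def SolvesHamJump {n m d : ℕ} (t0 T s : ℝ) (F : ℝ → Matrix (Fin n) (Fin n) ℝ)
    (G : ℝ → Matrix (Fin n) (Fin d) ℝ) (Q : ℝ → Matrix (Fin d) (Fin d) ℝ)
    (H : ℝ → Matrix (Fin m) (Fin n) ℝ) (R : ℝ → Matrix (Fin m) (Fin m) ℝ)
    (P0 : Matrix (Fin n) (Fin n) ℝ) (lamb : Fin n → ℝ) (gam lam : ℝ → Fin n → ℝ) : Prop :=
  ContinuousOn gam (Icc t0 T) ∧
  IntervalIntegrable (fun τ => (F τ).mulVec (gam τ) - (gqg G Q τ).mulVec (lam τ)) volume t0 T ∧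
  IntervalIntegrable (hamRHS F H R gam lam) volume t0 T ∧
  gam t0 = -(P0.mulVec (lam t0)) ∧
  (∀ t ∈ Icc t0 T,
    gam t = gam t0 + ∫ τ in t0..t, ((F τ).mulVec (gam τ) - (gqg G Q τ).mulVec (lam τ))) ∧
  ContinuousOn lam (Icc t0 s) ∧
  (∀ t ∈ Icc t0 s, lam t = lam s + ∫ τ in t..s, hamRHS F H R gam lam τ) ∧
  (s < T →
    ContinuousOn lam (Ioc s T) ∧ lam T = 0 ∧
    (∀ t ∈ Ioc s T, lam t = ∫ τ in t..T, hamRHS F H R gam lam τ) ∧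
    Tendsto lam (nhdsWithin s (Ioi s)) (nhds (lam s - lamb))) ∧
  (s = T → lam T = lamb)

/-- Carathéodory solution of the filter equation
`r' = (F - Π H* R⁻¹ H) r + Π H* R⁻¹ g`, `r(t0) = 0`. -/
def SolvesRODE {n m : ℕ} (a b : ℝ) (F : ℝ → Matrix (Fin n) (Fin n) ℝ)
    (H : ℝ → Matrix (Fin m) (Fin n) ℝ) (R : ℝ → Matrix (Fin m) (Fin m) ℝ)
    (P : ℝ → Matrix (Fin n) (Fin n) ℝ) (g : ℝ → Fin m → ℝ) (rr : ℝ → Fin n → ℝ) : Prop :=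
  ContinuousOn rr (Icc a b) ∧
  IntervalIntegrable (fun τ => (F τ - P τ * hrh H R τ).mulVec (rr τ) +
    (P τ * (H τ)ᵀ * (R τ)⁻¹).mulVec (g τ)) volume a b ∧
  rr a = 0 ∧
  ∀ t ∈ Icc a b, rr t = ∫ τ in a..t, ((F τ - P τ * hrh H R τ).mulVec (rr τ) +
    (P τ * (H τ)ᵀ * (R τ)⁻¹).mulVec (g τ))

/-- Carathéodory solution of the controlled ODE `x' = F x + G Q^{1/2} u`, `x(t0) = Π0^{1/2} ξ`. -/
def SolvesControlODE {n d : ℕ} (a b : ℝ) (F : ℝ → Matrix (Fin n) (Fin n) ℝ)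
    (G : ℝ → Matrix (Fin n) (Fin d) ℝ) (Qh : ℝ → Matrix (Fin d) (Fin d) ℝ)
    (P0h : Matrix (Fin n) (Fin n) ℝ) (ξ : Fin n → ℝ) (u : ℝ → Fin d → ℝ)
    (x : ℝ → Fin n → ℝ) : Prop :=
  ContinuousOn x (Icc a b) ∧
  IntervalIntegrable (fun σ => (F σ).mulVec (x σ) + (G σ * Qh σ).mulVec (u σ)) volume a b ∧
  x a = P0h.mulVec ξ ∧
  ∀ τ ∈ Icc a b, x τ = x a + ∫ σ in a..τ, ((F σ).mulVec (x σ) + (G σ * Qh σ).mulVec (u σ))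

/-- The least-squares objective of the deterministic smoothing problem. -/
def Jfun {n m d : ℕ} (a b : ℝ) (H : ℝ → Matrix (Fin m) (Fin n) ℝ)
    (R : ℝ → Matrix (Fin m) (Fin m) ℝ) (ST : Matrix (Fin n) (Fin n) ℝ)
    (ytil : ℝ → Fin m → ℝ) (ξ : Fin n → ℝ) (u : ℝ → Fin d → ℝ) (x : ℝ → Fin n → ℝ) : ℝ :=
  dotProduct ξ ξ + dotProduct (ST.mulVec (x b)) (x b)
    + (∫ τ in a..b, dotProduct (u τ) (u τ))
    + (∫ τ in a..b, dotProduct ((hrh H R τ).mulVec (x τ)) (x τ))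
    - 2 * ∫ τ in a..b, dotProduct (ytil τ) (((R τ)⁻¹ * H τ).mulVec (x τ))
/-- The Hamiltonian matrix `[[F, -GQG*], [-H*R⁻¹H, -F*]]`. -/
def hamMat {n m d : ℕ} (F : ℝ → Matrix (Fin n) (Fin n) ℝ)
    (G : ℝ → Matrix (Fin n) (Fin d) ℝ) (Q : ℝ → Matrix (Fin d) (Fin d) ℝ)
    (H : ℝ → Matrix (Fin m) (Fin n) ℝ) (R : ℝ → Matrix (Fin m) (Fin m) ℝ) (t : ℝ) :
    Matrix (Fin n ⊕ Fin n) (Fin n ⊕ Fin n) ℝ :=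
  Matrix.fromBlocks (F t) (-(gqg G Q t)) (-(hrh H R t)) (-(F t)ᵀ)

/-- `Φ̄(T,t) = [[I,0],[-ΣT,I]] · Φ_𝐇(T,t)`. -/
def phiBar {n : ℕ} (ST : Matrix (Fin n) (Fin n) ℝ)
    (PhiH : ℝ → ℝ → Matrix (Fin n ⊕ Fin n) (Fin n ⊕ Fin n) ℝ) (T t : ℝ) :
    Matrix (Fin n ⊕ Fin n) (Fin n ⊕ Fin n) ℝ :=
  Matrix.fromBlocks 1 0 (-ST) 1 * PhiH T t

/-! ### Absolutely continuous scalar functions -/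

/-- `f` is an absolutely continuous function on `[a,b]` with derivative `f'`, in the
Carathéodory sense: `f'` is integrable and `f` is its indefinite integral on `[a,b]`.
The values of `f` outside `[a,b]` play no role. -/
def Prim (f f' : ℝ → ℝ) (a b : ℝ) : Prop :=
  IntervalIntegrable f' volume a b ∧ ∀ s ∈ Icc a b, f s = f a + ∫ τ in a..s, f' τ

lemma ii_mono {f : ℝ → ℝ} {a b s t : ℝ} (h : IntervalIntegrable f volume a b)
    (hs : s ∈ Icc a b) (ht : t ∈ Icc a b) : IntervalIntegrable f volume s t := by
  refine h.mono_set ?_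
  rw [uIcc_of_le (hs.1.trans hs.2)]
  exact uIcc_subset_Icc hs ht

lemma ii_congr {f g : ℝ → ℝ} {a b : ℝ} (hab : a ≤ b) (h : IntervalIntegrable f volume a b)
    (hfg : ∀ t ∈ Icc a b, f t = g t) : IntervalIntegrable g volume a b := by
  refine h.congr ?_
  intro t ht
  rw [uIoc_of_le hab] at ht
  exact hfg t ⟨ht.1.le, ht.2⟩

lemma int_congr {f g : ℝ → ℝ} {a b s t : ℝ} (hs : s ∈ Icc a b) (ht : t ∈ Icc a b)
    (hfg : ∀ τ ∈ Icc a b, f τ = g τ) : ∫ τ in s..t, f τ = ∫ τ in s..t, g τ :=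
  intervalIntegral.integral_congr fun τ hτ => hfg τ (uIcc_subset_Icc hs ht hτ)

lemma Prim.integral_eq {f f' : ℝ → ℝ} {a b s t : ℝ} (h : Prim f f' a b)
    (hs : s ∈ Icc a b) (ht : t ∈ Icc a b) : ∫ τ in s..t, f' τ = f t - f s := by
  have ha : a ∈ Icc a b := ⟨le_rfl, hs.1.trans hs.2⟩
  rw [h.2 s hs, h.2 t ht,
    ← intervalIntegral.integral_add_adjacent_intervals (ii_mono h.1 ha hs) (ii_mono h.1 hs ht)]
  ring

lemma Prim.of_base {f f' : ℝ → ℝ} {a b c : ℝ} (hc : c ∈ Icc a b)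
    (hi : IntervalIntegrable f' volume a b)
    (h : ∀ s ∈ Icc a b, f s = f c + ∫ τ in c..s, f' τ) : Prim f f' a b := by
  have ha : a ∈ Icc a b := ⟨le_rfl, hc.1.trans hc.2⟩
  refine ⟨hi, fun s hs => ?_⟩
  rw [h s hs, h a ha,
    ← intervalIntegral.integral_add_adjacent_intervals (ii_mono hi hc ha) (ii_mono hi ha hs)]
  ring

lemma Prim.congr {f f' g g' : ℝ → ℝ} {a b : ℝ} (hab : a ≤ b) (h : Prim f f' a b)
    (hf : ∀ t ∈ Icc a b, f t = g t) (hf' : ∀ t ∈ Icc a b, f' t = g' t) : Prim g g' a b := by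
  have ha : a ∈ Icc a b := ⟨le_rfl, hab⟩
  refine ⟨ii_congr hab h.1 hf', fun s hs => ?_⟩
  rw [← hf s hs, ← hf a ha, h.2 s hs, int_congr ha hs hf']

lemma Prim.const (c a b : ℝ) : Prim (fun _ => c) (fun _ => 0) a b :=
  ⟨intervalIntegrable_const, fun s _ => by simp⟩

lemma Prim.integral {f' : ℝ → ℝ} {a b : ℝ} (h : IntervalIntegrable f' volume a b) :
    Prim (fun t => ∫ τ in a..t, f' τ) f' a b :=
  ⟨h, fun s _ => by simp⟩

lemma Prim.add {f f' g g' : ℝ → ℝ} {a b : ℝ} (hf : Prim f f' a b) (hg : Prim g g' a b) :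
    Prim (fun t => f t + g t) (fun t => f' t + g' t) a b := by
  refine ⟨hf.1.add hg.1, fun s hs => ?_⟩
  have ha : a ∈ Icc a b := ⟨le_rfl, hs.1.trans hs.2⟩
  beta_reduce
  rw [intervalIntegral.integral_add (ii_mono hf.1 ha hs) (ii_mono hg.1 ha hs), hf.2 s hs,
    hg.2 s hs]
  ring

lemma Prim.neg {f f' : ℝ → ℝ} {a b : ℝ} (hf : Prim f f' a b) :
    Prim (fun t => -f t) (fun t => -f' t) a b := by
  refine ⟨hf.1.neg, fun s hs => ?_⟩
  beta_reduce
  rw [intervalIntegral.integral_neg, hf.2 s hs]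
  ring

lemma Prim.sum {ι : Type*} (u : Finset ι) {f f' : ι → ℝ → ℝ} {a b : ℝ}
    (h : ∀ i ∈ u, Prim (f i) (f' i) a b) :
    Prim (fun t => ∑ i ∈ u, f i t) (fun t => ∑ i ∈ u, f' i t) a b := by
  classical
  induction u using Finset.induction_on with
  | empty => simpa using Prim.const 0 a b
  | insert i u hi ih =>
    simp only [Finset.sum_insert hi]
    exact (h i (Finset.mem_insert_self i u)).add
      (ih fun j hj => h j (Finset.mem_insert_of_mem hj))

/-- Bridge to Mathlib's absolutely continuous functions. The global representative
`f a + ∫_a^t f'` is used because it is differentiable almost everywhere on the closed interval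
whatever `f` does outside. -/
lemma Prim.ac_rep {f f' : ℝ → ℝ} {a b : ℝ} (h : Prim f f' a b) :
    AbsolutelyContinuousOnInterval (fun t => f a + ∫ τ in a..t, f' τ) a b ∧
      ∀ᵐ t, t ∈ uIcc a b → HasDerivAt (fun t => f a + ∫ τ in a..t, f' τ) (f' t) t := by
  constructor
  · have h1 := h.1.absolutelyContinuousOnInterval_intervalIntegral (c := a) (by simp)
    have h2 : AbsolutelyContinuousOnInterval (fun _ : ℝ => f a) a b :=
      contDiffOn_const.absolutelyContinuousOnInterval
    exact h2.add h1
  · filter_upwards [h.1.ae_hasDerivAt_integral] with t ht htm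
    exact (ht htm a (by simp)).const_add (f a)

/-- An absolutely continuous function whose almost everywhere derivative is `φ'`. -/
lemma Prim.of_ac {φ φ' : ℝ → ℝ} {a b : ℝ} (hab : a ≤ b) (h : AbsolutelyContinuousOnInterval φ a b)
    (hd : ∀ᵐ t, t ∈ uIcc a b → HasDerivAt φ (φ' t) t) : Prim φ φ' a b := by
  have hd' : ∀ᵐ t, t ∈ uIcc a b → deriv φ t = φ' t := by
    filter_upwards [hd] with t ht htm using (ht htm).deriv
  refine ⟨h.intervalIntegrable_deriv.congr_ae ?_, fun s hs => ?_⟩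
  · rw [Filter.EventuallyEq, ae_restrict_iff' measurableSet_uIoc]
    filter_upwards [hd'] with t ht htm using ht (uIoc_subset_uIcc htm)
  · have hsub : uIcc a s ⊆ uIcc a b := by
      rw [uIcc_of_le hab]; exact uIcc_subset_Icc ⟨le_rfl, hab⟩ hs
    have h1 := (h.mono hsub).integral_deriv_eq_sub
    rw [← intervalIntegral.integral_congr_ae (f := deriv φ), h1]
    · ring
    · filter_upwards [hd'] with t ht htm using ht (hsub (uIoc_subset_uIcc htm))

lemma Prim.continuousOn {f f' : ℝ → ℝ} {a b : ℝ} (h : Prim f f' a b) :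
    ContinuousOn f (Icc a b) := by
  rcases le_or_gt a b with hab | hab
  · have := h.ac_rep.1.continuousOn
    rw [uIcc_of_le hab] at this
    exact this.congr h.2
  · simp [Icc_eq_empty_of_lt hab]

lemma Prim.mul {f f' g g' : ℝ → ℝ} {a b : ℝ} (hab : a ≤ b)
    (hf : Prim f f' a b) (hg : Prim g g' a b) :
    Prim (fun t => f t * g t) (fun t => f' t * g t + f t * g' t) a b := by
  obtain ⟨hf1, hf2⟩ := hf.ac_rep
  obtain ⟨hg1, hg2⟩ := hg.ac_rep
  refine (Prim.of_ac hab (hf1.fun_mul hg1) ?_).congr hab (g := fun t => f t * g t) ?_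
    (f' := fun t => f' t * (g a + ∫ τ in a..t, g' τ) + (f a + ∫ τ in a..t, f' τ) * g' t) ?_
  · filter_upwards [hf2, hg2] with t h1 h2 htm using (h1 htm).mul (h2 htm)
  · intro t ht
    rw [hf.2 t ht, hg.2 t ht]
  · intro t ht
    rw [hf.2 t ht, hg.2 t ht]

/-- Chain rule for the exponential of an absolutely continuous function. -/
lemma Prim.exp {f f' : ℝ → ℝ} {a b : ℝ} (hab : a ≤ b) (hf : Prim f f' a b) :
    Prim (fun t => Real.exp (f t)) (fun t => f' t * Real.exp (f t)) a b := by
  obtain ⟨hf1, hf2⟩ := hf.ac_rep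
  set φ : ℝ → ℝ := fun t => f a + ∫ τ in a..t, f' τ with hφ
  have hAC : AbsolutelyContinuousOnInterval (fun t => Real.exp (φ t)) a b := by
    obtain ⟨C, hC⟩ := hf1.exists_bound
    -- `exp` is Lipschitz on the compact range of `φ`.
    obtain ⟨K, hK⟩ := (Real.contDiff_exp (n := 1)).contDiffOn.exists_lipschitzOnWith
      (s := Icc (-C) C) (by decide) (convex_Icc _ _) isCompact_Icc
    rw [absolutelyContinuousOnInterval_iff] at hf1 ⊢
    intro ε hε
    obtain ⟨δ, hδ, h⟩ := hf1 (ε / (K + 1)) (by positivity)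
    refine ⟨δ, hδ, fun E hE hlt => ?_⟩
    have hφE := h E hE hlt
    calc _ ≤ ∑ i ∈ Finset.range E.1, (K : ℝ) * dist (φ (E.2 i).1) (φ (E.2 i).2) := by
          refine Finset.sum_le_sum fun i hi => hK.dist_le_mul _ ?_ _ ?_
          · exact abs_le.mp (hC _ (hE.1 i hi).1)
          · exact abs_le.mp (hC _ (hE.1 i hi).2)
      _ = K * ∑ i ∈ Finset.range E.1, dist (φ (E.2 i).1) (φ (E.2 i).2) := by
          rw [Finset.mul_sum]
      _ ≤ K * (ε / (K + 1)) := by gcongr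
      _ < ε := by
          rw [← mul_div_assoc, div_lt_iff₀ (by positivity)]
          nlinarith
  refine (Prim.of_ac hab hAC (φ' := fun t => f' t * Real.exp (φ t)) ?_).congr hab ?_ ?_
  · filter_upwards [hf2] with t h1 htm
    have := (h1 htm).exp
    rwa [mul_comm] at this
  · intro t ht
    rw [hf.2 t ht]
  · intro t ht
    rw [hf.2 t ht]

/-- Grönwall's argument with an integrable rate, run in both directions from `c`: if `g ≥ 0`,
`|g'| ≤ k g` and `g` vanishes at one point `c` of `[a,b]`, then `g` vanishes on `[a,b]`. With
`κ = ∫ k`, the function `g e^{-κ}` is nonincreasing and `g e^{κ}` is nondecreasing. -/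
lemma Prim.eq_zero_of_abs_le {g g' k : ℝ → ℝ} {a b c : ℝ} (hg : Prim g g' a b)
    (hk : IntervalIntegrable k volume a b) (hg0 : ∀ t ∈ Icc a b, 0 ≤ g t)
    (hle : ∀ t ∈ Icc a b, |g' t| ≤ k t * g t) (hc : c ∈ Icc a b) (hgc : g c = 0) :
    ∀ t ∈ Icc a b, g t = 0 := by
  have hab : a ≤ b := hc.1.trans hc.2
  intro t ht
  have hκ := Prim.integral hk
  refine le_antisymm ?_ (hg0 t ht)
  rcases le_total c t with hct | htc
  · have hp := hg.mul hab (hκ.neg.exp hab)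
    have h1 := hp.integral_eq hc ht
    have h2 : ∫ τ in c..t, (g' τ * Real.exp (-∫ τ in a..τ, k τ) +
        g τ * (-k τ * Real.exp (-∫ τ in a..τ, k τ))) ≤ 0 := by
      rw [intervalIntegral.integral_of_le hct]
      refine setIntegral_nonpos measurableSet_Ioc fun τ hτ => ?_
      have hτ' : τ ∈ Icc a b := ⟨hc.1.trans hτ.1.le, hτ.2.trans ht.2⟩
      have := (abs_le.mp (hle τ hτ')).2
      have he := Real.exp_pos (-∫ τ in a..τ, k τ)
      nlinarith
    rw [h1, hgc] at h2
    have he := Real.exp_pos (-∫ τ in a..t, k τ)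
    by_contra hcon
    have := mul_pos (not_le.mp hcon) he
    linarith
  · have hp := hg.mul hab (hκ.exp hab)
    have h1 := hp.integral_eq ht hc
    have h2 : 0 ≤ ∫ τ in t..c, (g' τ * Real.exp (∫ τ in a..τ, k τ) +
        g τ * (k τ * Real.exp (∫ τ in a..τ, k τ))) := by
      rw [intervalIntegral.integral_of_le htc]
      refine setIntegral_nonneg measurableSet_Ioc fun τ hτ => ?_
      have hτ' : τ ∈ Icc a b := ⟨ht.1.trans hτ.1.le, hτ.2.trans hc.2⟩
      have := (abs_le.mp (hle τ hτ')).1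
      have he := Real.exp_pos (∫ τ in a..τ, k τ)
      nlinarith
    rw [h1, hgc] at h2
    have he := Real.exp_pos (∫ τ in a..t, k τ)
    by_contra hcon
    have := mul_pos (not_le.mp hcon) he
    linarith

/-! ### Absolutely continuous matrix functions and linear equations -/

/-- Entrywise version of `Prim`: the matrix function `X` is absolutely continuous on `[a,b]` with
derivative `X'`. -/
def MPrim {ι κ : Type*} (X X' : ℝ → Matrix ι κ ℝ) (a b : ℝ) : Prop :=
  ∀ i j, Prim (fun t => X t i j) (fun t => X' t i j) a b

section MatrixCalculus

variable {ι κ ρ : Type*} {a b : ℝ}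

lemma MPrim.matII {X X' : ℝ → Matrix ι κ ℝ} (h : MPrim X X' a b) : MatII X' a b :=
  fun i j => (h i j).1

lemma MPrim.matContOn {X X' : ℝ → Matrix ι κ ℝ} (h : MPrim X X' a b) : MatContOn X (Icc a b) :=
  fun i j => (h i j).continuousOn

lemma MPrim.matInt_eq {X X' : ℝ → Matrix ι κ ℝ} (h : MPrim X X' a b) {s t : ℝ}
    (hs : s ∈ Icc a b) (ht : t ∈ Icc a b) : matInt X' s t = X t - X s := by
  ext i j
  exact (h i j).integral_eq hs ht

lemma MPrim.of_base {X X' : ℝ → Matrix ι κ ℝ} {c : ℝ} (hc : c ∈ Icc a b) (hi : MatII X' a b)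
    (h : ∀ s ∈ Icc a b, X s = X c + matInt X' c s) : MPrim X X' a b :=
  fun i j => Prim.of_base hc (hi i j) fun s hs => congrFun (congrFun (h s hs) i) j

lemma MPrim.integral {X' : ℝ → Matrix ι κ ℝ} (h : MatII X' a b) :
    MPrim (fun t => matInt X' a t) X' a b :=
  fun i j => Prim.integral (h i j)

lemma MPrim.congr {X X' Y Y' : ℝ → Matrix ι κ ℝ} (hab : a ≤ b) (h : MPrim X X' a b)
    (hX : ∀ t ∈ Icc a b, X t = Y t) (hX' : ∀ t ∈ Icc a b, X' t = Y' t) : MPrim Y Y' a b :=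
  fun i j => (h i j).congr hab (fun t ht => by rw [hX t ht]) (fun t ht => by rw [hX' t ht])

lemma MPrim.const (C : Matrix ι κ ℝ) : MPrim (fun _ => C) (fun _ => 0) a b :=
  fun i j => Prim.const (C i j) a b

lemma MPrim.add {X X' Y Y' : ℝ → Matrix ι κ ℝ} (hX : MPrim X X' a b) (hY : MPrim Y Y' a b) :
    MPrim (fun t => X t + Y t) (fun t => X' t + Y' t) a b :=
  fun i j => (hX i j).add (hY i j)

lemma MPrim.neg {X X' : ℝ → Matrix ι κ ℝ} (hX : MPrim X X' a b) :
    MPrim (fun t => -X t) (fun t => -X' t) a b :=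
  fun i j => (hX i j).neg

lemma MPrim.sub {X X' Y Y' : ℝ → Matrix ι κ ℝ} (hX : MPrim X X' a b) (hY : MPrim Y Y' a b) :
    MPrim (fun t => X t - Y t) (fun t => X' t - Y' t) a b := by
  simpa only [sub_eq_add_neg] using hX.add hY.neg

lemma MPrim.transpose {X X' : ℝ → Matrix ι κ ℝ} (hX : MPrim X X' a b) :
    MPrim (fun t => (X t)ᵀ) (fun t => (X' t)ᵀ) a b :=
  fun i j => hX j i

lemma MPrim.mul [Fintype κ] {X X' : ℝ → Matrix ι κ ℝ} {Y Y' : ℝ → Matrix κ ρ ℝ} (hab : a ≤ b)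
    (hX : MPrim X X' a b) (hY : MPrim Y Y' a b) :
    MPrim (fun t => X t * Y t) (fun t => X' t * Y t + X t * Y' t) a b := by
  intro i j
  have := Prim.sum Finset.univ fun k _ => (hX i k).mul hab (hY k j)
  simpa only [Matrix.add_apply, Matrix.mul_apply, ← Finset.sum_add_distrib] using this

lemma MatII.add {X Y : ℝ → Matrix ι κ ℝ} (hX : MatII X a b) (hY : MatII Y a b) :
    MatII (fun t => X t + Y t) a b :=
  fun i j => (hX i j).add (hY i j)

lemma MatII.neg {X : ℝ → Matrix ι κ ℝ} (hX : MatII X a b) : MatII (fun t => -X t) a b :=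
  fun i j => (hX i j).neg

lemma MatII.sub {X Y : ℝ → Matrix ι κ ℝ} (hX : MatII X a b) (hY : MatII Y a b) :
    MatII (fun t => X t - Y t) a b :=
  fun i j => (hX i j).sub (hY i j)

lemma MatII.transpose {X : ℝ → Matrix ι κ ℝ} (hX : MatII X a b) :
    MatII (fun t => (X t)ᵀ) a b :=
  fun i j => hX j i

lemma MatContOn.transpose {X : ℝ → Matrix ι κ ℝ} {s : Set ℝ} (hX : MatContOn X s) :
    MatContOn (fun t => (X t)ᵀ) s :=
  fun i j => hX j i

lemma ii_sum {σ : Type*} (u : Finset σ) {f : σ → ℝ → ℝ}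
    (h : ∀ i ∈ u, IntervalIntegrable (f i) volume a b) :
    IntervalIntegrable (fun t => ∑ i ∈ u, f i t) volume a b := by
  simpa only [Finset.sum_fn] using IntervalIntegrable.sum u h

lemma MatII.mul_cont [Fintype κ] {X : ℝ → Matrix ι κ ℝ} {Y : ℝ → Matrix κ ρ ℝ} (hab : a ≤ b)
    (hX : MatII X a b) (hY : MatContOn Y (Icc a b)) : MatII (fun t => X t * Y t) a b := by
  intro i j
  simp only [Matrix.mul_apply]
  refine ii_sum _ fun k _ => (hX i k).mul_continuousOn ?_
  rw [uIcc_of_le hab]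
  exact hY k j

lemma MatContOn.cont_mul [Fintype κ] {X : ℝ → Matrix ι κ ℝ} {Y : ℝ → Matrix κ ρ ℝ} (hab : a ≤ b)
    (hX : MatContOn X (Icc a b)) (hY : MatII Y a b) : MatII (fun t => X t * Y t) a b := by
  intro i j
  simp only [Matrix.mul_apply]
  refine ii_sum _ fun k _ => (hY k j).continuousOn_mul ?_
  rw [uIcc_of_le hab]
  exact hX i k

lemma MatII.congr {X Y : ℝ → Matrix ι κ ℝ} (hab : a ≤ b) (hX : MatII X a b)
    (h : ∀ t ∈ Icc a b, X t = Y t) : MatII Y a b :=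
  fun i j => ii_congr hab (hX i j) fun t ht => by rw [h t ht]

lemma matInt_congr {X Y : ℝ → Matrix ι κ ℝ} {s t : ℝ} (hs : s ∈ Icc a b) (ht : t ∈ Icc a b)
    (h : ∀ τ ∈ Icc a b, X τ = Y τ) : matInt X s t = matInt Y s t := by
  ext i j
  exact int_congr hs ht fun τ hτ => by rw [h τ hτ]

lemma matInt_const_mul_mul [Fintype ι] [Fintype κ] {σ : Type*} {X : ℝ → Matrix ι κ ℝ}
    (hX : MatII X a b) (C : Matrix ρ ι ℝ) (D : Matrix κ σ ℝ) {s t : ℝ} (hs : s ∈ Icc a b)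
    (ht : t ∈ Icc a b) : matInt (fun τ => C * X τ * D) s t = C * matInt X s t * D := by
  have hab : a ≤ b := hs.1.trans hs.2
  have hJ := MPrim.integral hX
  have h := ((MPrim.const C).mul hab hJ).mul hab (MPrim.const D)
  have h1 := h.matInt_eq hs ht
  simp only [Matrix.zero_mul, Matrix.mul_zero, zero_add, add_zero] at h1
  rw [h1, hJ.matInt_eq hs ht, Matrix.mul_sub, Matrix.sub_mul]

/-- A linear homogeneous matrix equation `X' = C X + X D` with integrable coefficients has only
the zero solution vanishing at a point: apply the Grönwall argument to `∑ X_{ij}²`. -/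
lemma MPrim.eq_zero_of_linear [Fintype ι] [Fintype κ] {X : ℝ → Matrix ι κ ℝ}
    {C : ℝ → Matrix ι ι ℝ} {D : ℝ → Matrix κ κ ℝ}
    (hX : MPrim X (fun t => C t * X t + X t * D t) a b) (hC : MatII C a b) (hD : MatII D a b)
    {c : ℝ} (hc : c ∈ Icc a b) (hXc : X c = 0) : ∀ t ∈ Icc a b, X t = 0 := by
  have hab : a ≤ b := hc.1.trans hc.2
  set κ' : ℝ → ℝ := fun t => (∑ i, ∑ l, |C t i l|) + ∑ l, ∑ j, |D t l j| with hκ'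
  set g : ℝ → ℝ := fun t => ∑ i, ∑ j, X t i j * X t i j with hg
  have hgP : Prim g _ a b :=
    Prim.sum Finset.univ fun i _ => Prim.sum Finset.univ fun j _ => (hX i j).mul hab (hX i j)
  have hg0 : ∀ t, 0 ≤ g t := fun t =>
    Finset.sum_nonneg fun i _ => Finset.sum_nonneg fun j _ => mul_self_nonneg _
  have hXg : ∀ t i j, |X t i j| ≤ √(g t) := by
    intro t i j
    refine Real.abs_le_sqrt ?_
    rw [sq]
    refine le_trans ?_ (Finset.single_le_sum
      (f := fun i => ∑ j, X t i j * X t i j)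
      (fun i _ => Finset.sum_nonneg fun j _ => mul_self_nonneg _) (Finset.mem_univ i))
    exact Finset.single_le_sum (f := fun j => X t i j * X t i j)
      (fun j _ => mul_self_nonneg _) (Finset.mem_univ j)
  have hX'g : ∀ t i j, |(C t * X t + X t * D t) i j| ≤ κ' t * √(g t) := by
    intro t i j
    rw [Matrix.add_apply, Matrix.mul_apply, Matrix.mul_apply, hκ', add_mul]
    refine (abs_add_le _ _).trans (add_le_add ?_ ?_)
    · calc |∑ l, C t i l * X t l j| ≤ ∑ l, |C t i l| * √(g t) := by
            refine (Finset.abs_sum_le_sum_abs _ _).trans (Finset.sum_le_sum fun l _ => ?_)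
            rw [abs_mul]
            exact mul_le_mul_of_nonneg_left (hXg t l j) (abs_nonneg _)
        _ ≤ _ := by
            rw [← Finset.sum_mul]
            refine mul_le_mul_of_nonneg_right ?_ (Real.sqrt_nonneg _)
            exact Finset.single_le_sum (f := fun i => ∑ l, |C t i l|)
              (fun i _ => Finset.sum_nonneg fun l _ => abs_nonneg _) (Finset.mem_univ i)
    · calc |∑ l, X t i l * D t l j| ≤ ∑ l, |D t l j| * √(g t) := by
            refine (Finset.abs_sum_le_sum_abs _ _).trans (Finset.sum_le_sum fun l _ => ?_)
            rw [abs_mul, mul_comm]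
            exact mul_le_mul_of_nonneg_left (hXg t i l) (abs_nonneg _)
        _ ≤ _ := by
            rw [← Finset.sum_mul]
            refine mul_le_mul_of_nonneg_right ?_ (Real.sqrt_nonneg _)
            exact Finset.sum_le_sum fun l _ => Finset.single_le_sum (f := fun j => |D t l j|)
              (fun j _ => abs_nonneg _) (Finset.mem_univ j)
  have hκint : IntervalIntegrable κ' volume a b :=
    (ii_sum _ fun i _ => ii_sum _ fun l _ => (hC i l).abs).add
      (ii_sum _ fun l _ => ii_sum _ fun j _ => (hD l j).abs)
  have hz := hgP.eq_zero_of_abs_le (k := fun t => ∑ _i : ι, ∑ _j : κ, 2 * κ' t)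
    (ii_sum _ fun i _ => ii_sum _ fun l _ => hκint.const_mul 2)
    (fun t _ => hg0 t) ?_ hc (by simp [hg, hXc])
  · intro t ht
    ext i j
    have := hXg t i j
    rw [hz t ht, Real.sqrt_zero] at this
    simpa using abs_nonpos_iff.mp this
  · intro t _
    beta_reduce
    rw [Finset.sum_mul]
    refine (Finset.abs_sum_le_sum_abs _ _).trans (Finset.sum_le_sum fun i _ => ?_)
    rw [Finset.sum_mul]
    refine (Finset.abs_sum_le_sum_abs _ _).trans (Finset.sum_le_sum fun j _ => ?_)
    have h1 : |(C t * X t + X t * D t) i j| * |X t i j| ≤ κ' t * √(g t) * √(g t) :=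
      mul_le_mul (hX'g t i j) (hXg t i j) (abs_nonneg _)
        ((abs_nonneg _).trans (hX'g t i j))
    rw [mul_assoc, Real.mul_self_sqrt (hg0 t)] at h1
    rw [mul_comm (X t i j), ← two_mul, abs_mul, abs_two, abs_mul, mul_assoc]
    linarith

end MatrixCalculus

/-! ### Coefficients: integrability and positivity -/

section Coefficients

variable {n m d : ℕ} {a b r : ℝ}

lemma posDef_of_sub_smul_one {A : Matrix (Fin m) (Fin m) ℝ} (hr : 0 < r)
    (h : (A - r • (1 : Matrix (Fin m) (Fin m) ℝ)).PosSemidef) : A.PosDef := by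
  have h1 : (r • (1 : Matrix (Fin m) (Fin m) ℝ)).PosDef := Matrix.PosDef.one.smul hr
  have := h1.add_posSemidef h
  simpa using this

/-- If `A ⪰ r I` with `r > 0` then the entries of `A⁻¹` are bounded by `1 / r`. With `x` a column
`j` of `A⁻¹`, this is `r |x|² ≤ x ⬝ A x = x_j ≤ |x|`. -/
lemma abs_inv_apply_le {A : Matrix (Fin m) (Fin m) ℝ} (hr : 0 < r)
    (h : (A - r • (1 : Matrix (Fin m) (Fin m) ℝ)).PosSemidef) (i j : Fin m) :
    |A⁻¹ i j| ≤ 1 / r := by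
  have hA := posDef_of_sub_smul_one hr h
  set x : Fin m → ℝ := fun k => A⁻¹ k j with hx
  have hAx : A *ᵥ x = Pi.single j 1 := by
    have h1 : x = A⁻¹ *ᵥ Pi.single j 1 := by
      ext k; simp [hx]
    have h2 : A * A⁻¹ = 1 := Matrix.mul_nonsing_inv _ (A.isUnit_iff_isUnit_det.mp hA.isUnit)
    rw [h1, Matrix.mulVec_mulVec, h2, Matrix.one_mulVec]
  have hq : r * (x ⬝ᵥ x) ≤ x j := by
    have h3 := h.dotProduct_mulVec_nonneg x
    rw [Matrix.sub_mulVec, hAx, Matrix.smul_mulVec, Matrix.one_mulVec, dotProduct_sub,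
      dotProduct_smul] at h3
    simp only [star_trivial, dotProduct_single, mul_one, smul_eq_mul] at h3
    linarith
  have hle : ∀ k, x k * x k ≤ x ⬝ᵥ x := fun k =>
    Finset.single_le_sum (f := fun k => x k * x k) (fun k _ => mul_self_nonneg _)
      (Finset.mem_univ k)
  have hxj : r * x j ≤ 1 := by
    have h1 := hle j
    have h2 := mul_le_mul_of_nonneg_left h1 hr.le
    by_contra hcon
    have : 0 < x j := by
      by_contra h0
      nlinarith
    nlinarith
  have hxi : (r * x i) ^ 2 ≤ 1 ^ 2 := by
    have h1 := mul_le_mul_of_nonneg_left (hle i) hr.le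
    nlinarith
  have h4 : |r * x i| ≤ 1 := abs_le_of_sq_le_sq hxi zero_le_one
  rw [le_div_iff₀ hr]
  rw [abs_mul, abs_of_pos hr] at h4
  linarith

lemma aesm_inv {R : ℝ → Matrix (Fin m) (Fin m) ℝ} {μ : Measure ℝ}
    (hR : ∀ i j, AEStronglyMeasurable (fun t => R t i j) μ) (i j : Fin m) :
    AEStronglyMeasurable (fun t => (R t)⁻¹ i j) μ := by
  have h : AEStronglyMeasurable R μ :=
    (aemeasurable_pi_lambda (δ := Fin m) (X := fun _ => Fin m → ℝ) R fun i =>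
      aemeasurable_pi_lambda _ fun j => (hR i j).aemeasurable).aestronglyMeasurable
  have hd : AEStronglyMeasurable (fun t => (R t).det) μ :=
    (continuous_id.matrix_det).comp_aestronglyMeasurable h
  have ha : AEStronglyMeasurable (fun t => (R t).adjugate i j) μ :=
    ((continuous_id.matrix_adjugate).matrix_elem i j).comp_aestronglyMeasurable h
  have e : (fun t => (R t)⁻¹ i j) = fun t => ((R t).det)⁻¹ * (R t).adjugate i j := by
    ext t
    simp [Matrix.inv_def]
  rw [e]
  exact hd.aemeasurable.inv.aestronglyMeasurable.mul ha

/-- `Hᵀ R⁻¹ H` is integrable: `R⁻¹` is measurable with entries bounded by `1 / r`, and products of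
entries of `H` are dominated by sums of squares. -/
lemma hrh_matII (hab : a ≤ b) (hr : 0 < r) {H : ℝ → Matrix (Fin m) (Fin n) ℝ}
    {R : ℝ → Matrix (Fin m) (Fin m) ℝ} (hH : MatL2 H a b) (hR : MatL2 R a b)
    (hRbd : ∀ t ∈ Icc a b, (R t - r • (1 : Matrix (Fin m) (Fin m) ℝ)).PosSemidef) :
    MatII (hrh H R) a b := by
  intro i j
  simp only [hrh, Matrix.mul_apply, Matrix.transpose_apply, Finset.sum_mul]
  refine ii_sum _ fun l _ => ii_sum _ fun k _ => ?_
  refine (((hH k i).2.add (hH l j).2).const_mul (1 / r)).mono_fun ?_ ?_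
  · refine ((hH k i).1.aestronglyMeasurable_restrict_uIoc.mul ?_).mul
      (hH l j).1.aestronglyMeasurable_restrict_uIoc
    exact aesm_inv (fun i j => (hR i j).1.aestronglyMeasurable_restrict_uIoc) k l
  · rw [Filter.EventuallyLE, ae_restrict_iff' measurableSet_uIoc]
    refine Filter.Eventually.of_forall fun t ht => ?_
    rw [uIoc_of_le hab] at ht
    have h1 := abs_inv_apply_le hr (hRbd t ⟨ht.1.le, ht.2⟩) k l
    have h2 : |H t k i| * |H t l j| ≤ (H t k i) ^ 2 + (H t l j) ^ 2 := by
      nlinarith [sq_nonneg (|H t k i| - |H t l j|), sq_abs (H t k i), sq_abs (H t l j),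
        sq_nonneg (H t k i), sq_nonneg (H t l j)]
    have h3 : 0 < 1 / r := by positivity
    rw [Real.norm_eq_abs, Real.norm_eq_abs, abs_mul, abs_mul]
    refine le_trans ?_ (le_abs_self _)
    calc |H t k i| * |(R t)⁻¹ k l| * |H t l j| = |(R t)⁻¹ k l| * (|H t k i| * |H t l j|) := by ring
      _ ≤ 1 / r * ((H t k i) ^ 2 + (H t l j) ^ 2) :=
        mul_le_mul h1 h2 (by positivity) h3.le

lemma hrh_posSemidef (hr : 0 < r) {H : ℝ → Matrix (Fin m) (Fin n) ℝ}
    {R : ℝ → Matrix (Fin m) (Fin m) ℝ} {t : ℝ}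
    (h : (R t - r • (1 : Matrix (Fin m) (Fin m) ℝ)).PosSemidef) : (hrh H R t).PosSemidef := by
  have h1 := (posDef_of_sub_smul_one hr h).inv.posSemidef.conjTranspose_mul_mul_same (H t)
  rwa [conjTranspose_eq_transpose_of_trivial] at h1

lemma gqg_posSemidef {G : ℝ → Matrix (Fin n) (Fin d) ℝ} {Q : ℝ → Matrix (Fin d) (Fin d) ℝ}
    {t : ℝ} (h : (Q t).PosSemidef) : (gqg G Q t).PosSemidef := by
  have h1 := h.mul_mul_conjTranspose_same (G t)
  rwa [conjTranspose_eq_transpose_of_trivial] at h1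

lemma transpose_eq_of_posSemidef {A : Matrix (Fin n) (Fin n) ℝ} (h : A.PosSemidef) : Aᵀ = A := by
  have := h.isHermitian.eq
  rwa [conjTranspose_eq_transpose_of_trivial] at this

lemma matInt_posSemidef {X : ℝ → Matrix (Fin n) (Fin n) ℝ} (hX : MatII X a b)
    (hab : a ≤ b) (h : ∀ t ∈ Icc a b, (X t).PosSemidef) : (matInt X a b).PosSemidef := by
  refine Matrix.PosSemidef.of_dotProduct_mulVec_nonneg ?_ fun v => ?_
  · ext i j
    rw [conjTranspose_eq_transpose_of_trivial]
    refine int_congr ⟨le_rfl, hab⟩ ⟨hab, le_rfl⟩ fun τ hτ => ?_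
    exact congrFun (congrFun (transpose_eq_of_posSemidef (h τ hτ)) i) j
  · have e : star v ⬝ᵥ matInt X a b *ᵥ v = ∫ τ in a..b, star v ⬝ᵥ X τ *ᵥ v := by
      simp only [dotProduct, mulVec, matInt, Matrix.of_apply, Finset.mul_sum]
      rw [intervalIntegral.integral_finsetSum]
      · refine Finset.sum_congr rfl fun i _ => ?_
        rw [intervalIntegral.integral_finsetSum]
        · refine Finset.sum_congr rfl fun j _ => ?_
          rw [intervalIntegral.integral_const_mul, intervalIntegral.integral_mul_const]
        · exact fun j _ => ((hX i j).mul_const _).const_mul _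
      · exact fun i _ => ii_sum _ fun j _ => ((hX i j).mul_const _).const_mul _
    rw [e]
    exact intervalIntegral.integral_nonneg hab fun τ hτ => (h τ hτ).dotProduct_mulVec_nonneg v

end Coefficients

/-! ### Transition matrices -/

section Transition

variable {n : ℕ} {a b : ℝ} {A : ℝ → Matrix (Fin n) (Fin n) ℝ}
  {Φ : ℝ → ℝ → Matrix (Fin n) (Fin n) ℝ}

lemma IsTransition.self (h : IsTransition a b A Φ) {t : ℝ} (ht : t ∈ Icc a b) : Φ t t = 1 := by
  rw [(h t ht).2.2 t ht]
  ext i j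
  simp [matInt]

lemma IsTransition.mprim (h : IsTransition a b A Φ) {t : ℝ} (ht : t ∈ Icc a b) :
    MPrim (fun s => Φ s t) (fun s => A s * Φ s t) a b :=
  MPrim.of_base ht (h t ht).2.1 fun s hs => by rw [h.self ht]; exact (h t ht).2.2 s hs

/-- The cocycle identity, by uniqueness for the linear equation in the first variable. -/
lemma IsTransition.comp (h : IsTransition a b A Φ) (hA : MatII A a b) {s t u : ℝ}
    (hs : s ∈ Icc a b) (ht : t ∈ Icc a b) (hu : u ∈ Icc a b) : Φ s t * Φ t u = Φ s u := by
  have hab : a ≤ b := hs.1.trans hs.2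
  have h1 := ((h.mprim ht).mul hab (MPrim.const (Φ t u))).sub (h.mprim hu)
  have h2 : MPrim (fun s => Φ s t * Φ t u - Φ s u)
      (fun s => A s * (Φ s t * Φ t u - Φ s u) + (Φ s t * Φ t u - Φ s u) * 0) a b :=
    h1.congr hab (fun _ _ => rfl) fun s _ => by noncomm_ring
  exact sub_eq_zero.mp (h2.eq_zero_of_linear hA (MPrim.const 0).matII ht
    (by simp [h.self ht]) s hs)

lemma IsTransition.isUnit_det (h : IsTransition a b A Φ) (hA : MatII A a b) {s t : ℝ}
    (hs : s ∈ Icc a b) (ht : t ∈ Icc a b) : IsUnit (Φ s t).det := by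
  refine Matrix.isUnit_det_of_left_inverse (B := Φ t s) ?_
  rw [h.comp hA ht hs ht, h.self ht]

lemma IsTransition.eq_mul_inv (h : IsTransition a b A Φ) (hA : MatII A a b) {s t u : ℝ}
    (hs : s ∈ Icc a b) (ht : t ∈ Icc a b) (hu : u ∈ Icc a b) :
    Φ s t = Φ s u * (Φ t u)⁻¹ := by
  rw [← h.comp hA hs ht hu, Matrix.mul_assoc, Matrix.mul_nonsing_inv _ (h.isUnit_det hA ht hu),
    Matrix.mul_one]

lemma matContOn_inv {X : ℝ → Matrix (Fin n) (Fin n) ℝ} {s : Set ℝ} (hX : MatContOn X s)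
    (hu : ∀ t ∈ s, IsUnit (X t).det) : MatContOn (fun t => (X t)⁻¹) s := by
  have hX' : ContinuousOn X s :=
    continuousOn_pi.mpr fun i => continuousOn_pi.mpr fun j => hX i j
  intro i j
  have hd : ContinuousOn (fun t => (X t).det) s := (continuous_id.matrix_det).comp_continuousOn hX'
  have ha : ContinuousOn (fun t => (X t).adjugate i j) s :=
    ((continuous_id.matrix_adjugate).matrix_elem i j).comp_continuousOn hX'
  refine ((hd.inv₀ fun t ht => (hu t ht).ne_zero).mul ha).congr fun t _ => ?_
  simp [Matrix.inv_def]

end Transition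

/-! ### Riccati and Lyapunov equations

Here `P` and `S` stand for `Π` and `Σ`, `V` and `W` for `G Q Gᵀ` and `Hᵀ R⁻¹ H`, and `Φ`, `Ω` for
the flows of `F - VΣ` and `F - ΠW` from the initial time `a`. -/

section Riccati

variable {n : ℕ} {a b : ℝ} {F V W P S Φ Ω : ℝ → Matrix (Fin n) (Fin n) ℝ}

lemma fwd_riccati_symm (hab : a ≤ b) (hF : MatII F a b) (hW : MatII W a b)
    (hVs : ∀ t ∈ Icc a b, (V t)ᵀ = V t) (hWs : ∀ t ∈ Icc a b, (W t)ᵀ = W t)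
    (hP : MPrim P (fun t => F t * P t + P t * (F t)ᵀ - P t * W t * P t + V t) a b)
    (h0 : (P a)ᵀ = P a) : ∀ t ∈ Icc a b, (P t)ᵀ = P t := by
  have hPc := hP.matContOn
  have h1 : MPrim (fun t => P t - (P t)ᵀ)
      (fun t => (F t - (P t)ᵀ * W t) * (P t - (P t)ᵀ)
        + (P t - (P t)ᵀ) * ((F t)ᵀ - W t * P t)) a b := by
    refine (hP.sub hP.transpose).congr hab (fun _ _ => rfl) fun t ht => ?_
    simp only [transpose_add, transpose_sub, transpose_mul, transpose_transpose, hVs t ht,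
      hWs t ht]
    noncomm_ring
  intro t ht
  exact (sub_eq_zero.mp (h1.eq_zero_of_linear (hF.sub (hPc.transpose.cont_mul hab hW))
    (hF.transpose.sub (hW.mul_cont hab hPc)) ⟨le_rfl, hab⟩ (by simp [h0]) t ht)).symm

lemma back_riccati_symm (hab : a ≤ b) (hF : MatII F a b) (hV : MatII V a b)
    (hVs : ∀ t ∈ Icc a b, (V t)ᵀ = V t) (hWs : ∀ t ∈ Icc a b, (W t)ᵀ = W t)
    (hS : MPrim S (fun t => -(S t * F t + (F t)ᵀ * S t - S t * V t * S t + W t)) a b)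
    (h0 : S b = 0) : ∀ t ∈ Icc a b, (S t)ᵀ = S t := by
  have hSc := hS.matContOn
  have h1 : MPrim (fun t => S t - (S t)ᵀ)
      (fun t => (-(F t)ᵀ + (S t)ᵀ * V t) * (S t - (S t)ᵀ)
        + (S t - (S t)ᵀ) * (-F t + V t * S t)) a b := by
    refine (hS.sub hS.transpose).congr hab (fun _ _ => rfl) fun t ht => ?_
    simp only [transpose_add, transpose_sub, transpose_neg, transpose_mul, transpose_transpose,
      hVs t ht, hWs t ht]
    noncomm_ring
  intro t ht
  exact (sub_eq_zero.mp (h1.eq_zero_of_linear (hF.transpose.neg.add (hSc.transpose.cont_mul hab hV))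
    (hF.neg.add (hV.mul_cont hab hSc)) ⟨hab, le_rfl⟩ (by simp [h0]) t ht)).symm

/-- The two closed-loop flows are intertwined by `M = 1 + ΠΣ`, because
`M' = (F - ΠW) M - M (F - VΣ)`. -/
lemma intertwine (hab : a ≤ b) (hF : MatII F a b) (hW : MatII W a b)
    (hP : MPrim P (fun t => F t * P t + P t * (F t)ᵀ - P t * W t * P t + V t) a b)
    (hS : MPrim S (fun t => -(S t * F t + (F t)ᵀ * S t - S t * V t * S t + W t)) a b)
    (hΦ : MPrim Φ (fun t => (F t - V t * S t) * Φ t) a b)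
    (hΩ : MPrim Ω (fun t => (F t - P t * W t) * Ω t) a b)
    (hΦ0 : Φ a = 1) (hΩ0 : Ω a = 1) :
    ∀ t ∈ Icc a b, (1 + P t * S t) * Φ t = Ω t * (1 + P a * S a) := by
  have hM := ((MPrim.const 1).add (hP.mul hab hS)).mul hab hΦ
  have h1 : MPrim (fun t => (1 + P t * S t) * Φ t - Ω t * (1 + P a * S a))
      (fun t => (F t - P t * W t) * ((1 + P t * S t) * Φ t - Ω t * (1 + P a * S a))
        + ((1 + P t * S t) * Φ t - Ω t * (1 + P a * S a)) * 0) a b := by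
    refine (hM.sub (hΩ.mul hab (MPrim.const (1 + P a * S a)))).congr hab
      (fun _ _ => rfl) fun t _ => ?_
    noncomm_ring
  intro t ht
  exact sub_eq_zero.mp (h1.eq_zero_of_linear (hF.sub (hP.matContOn.cont_mul hab hW))
    (MPrim.const 0).matII ⟨le_rfl, hab⟩ (by simp [hΦ0, hΩ0]) t ht)

/-- `1 + ΠΣ` is invertible throughout: at the terminal time it is the identity, and it differs
from that by the invertible flows. -/
lemma isUnit_one_add_mul (hab : a ≤ b) (hSb : S b = 0)
    (hΦu : ∀ t ∈ Icc a b, IsUnit (Φ t).det) (hΩu : ∀ t ∈ Icc a b, IsUnit (Ω t).det)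
    (h : ∀ t ∈ Icc a b, (1 + P t * S t) * Φ t = Ω t * (1 + P a * S a)) :
    ∀ t ∈ Icc a b, IsUnit (1 + P t * S t).det := by
  have hb : b ∈ Icc a b := ⟨hab, le_rfl⟩
  have h0 : IsUnit (1 + P a * S a).det := by
    have h1 := congrArg Matrix.det (h b hb)
    rw [hSb, Matrix.mul_zero, add_zero, Matrix.one_mul, det_mul] at h1
    exact isUnit_of_mul_isUnit_right (h1 ▸ hΦu b hb)
  intro t ht
  have h1 := congrArg Matrix.det (h t ht)
  rw [det_mul, det_mul] at h1
  exact isUnit_of_mul_isUnit_left (h1 ▸ (hΩu t ht).mul h0)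

/-- If `K` solves the Lyapunov equation of the `Σ`-flow with `K(a)(1 + Σ(a)Π(a)) = Π(a)`, then
`K (1 + ΣΠ) = Π`: the difference of the two sides solves a homogeneous linear equation. -/
lemma lyapunov_mul_eq {K : ℝ → Matrix (Fin n) (Fin n) ℝ} (hab : a ≤ b) (hF : MatII F a b)
    (hV : MatII V a b) (hW : MatII W a b)
    (hVs : ∀ t ∈ Icc a b, (V t)ᵀ = V t) (hWs : ∀ t ∈ Icc a b, (W t)ᵀ = W t)
    (hPs : ∀ t ∈ Icc a b, (P t)ᵀ = P t) (hSs : ∀ t ∈ Icc a b, (S t)ᵀ = S t)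
    (hP : MPrim P (fun t => F t * P t + P t * (F t)ᵀ - P t * W t * P t + V t) a b)
    (hS : MPrim S (fun t => -(S t * F t + (F t)ᵀ * S t - S t * V t * S t + W t)) a b)
    (hK : MPrim K (fun t => (F t - V t * S t) * K t + K t * (F t - V t * S t)ᵀ + V t) a b)
    (hK0 : K a * (1 + S a * P a) = P a) :
    ∀ t ∈ Icc a b, K t * (1 + S t * P t) = P t := by
  have hA := hF.sub (hV.mul_cont hab hS.matContOn)
  have hB := hF.sub (hP.matContOn.cont_mul hab hW)
  have h1 : MPrim (fun t => K t * (1 + S t * P t) - P t)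
      (fun t => (F t - V t * S t) * (K t * (1 + S t * P t) - P t)
        + (K t * (1 + S t * P t) - P t) * (F t - P t * W t)ᵀ) a b := by
    refine ((hK.mul hab ((MPrim.const 1).add (hS.mul hab hP))).sub hP).congr hab
      (fun _ _ => rfl) fun t ht => ?_
    simp only [transpose_sub, transpose_mul, hVs t ht, hWs t ht, hPs t ht, hSs t ht]
    noncomm_ring
  intro t ht
  exact sub_eq_zero.mp (h1.eq_zero_of_linear hA hB.transpose ⟨le_rfl, hab⟩ (by simp [hK0]) t ht)

/-- Variation of constants: the covariance `Φ(t) (K₀ + ∫ Φ⁻¹ V Φ⁻ᵀ) Φ(t)ᵀ` solves the Lyapunov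
equation. -/
lemma lyapunov_rep {A : ℝ → Matrix (Fin n) (Fin n) ℝ} (hab : a ≤ b) (hV : MatII V a b)
    (hΦ : MPrim Φ (fun t => A t * Φ t) a b) (hΦu : ∀ t ∈ Icc a b, IsUnit (Φ t).det)
    (K0 : Matrix (Fin n) (Fin n) ℝ) :
    MPrim (fun t => Φ t * (K0 + matInt (fun τ => (Φ τ)⁻¹ * V τ * ((Φ τ)⁻¹)ᵀ) a t) * (Φ t)ᵀ)
      (fun t => A t * (Φ t * (K0 + matInt (fun τ => (Φ τ)⁻¹ * V τ * ((Φ τ)⁻¹)ᵀ) a t) * (Φ t)ᵀ)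
        + (Φ t * (K0 + matInt (fun τ => (Φ τ)⁻¹ * V τ * ((Φ τ)⁻¹)ᵀ) a t) * (Φ t)ᵀ) * (A t)ᵀ
        + V t) a b := by
  have hc := matContOn_inv hΦ.matContOn hΦu
  have hI : MatII (fun τ => (Φ τ)⁻¹ * V τ * ((Φ τ)⁻¹)ᵀ) a b :=
    (hc.cont_mul hab hV).mul_cont hab hc.transpose
  refine ((hΦ.mul hab ((MPrim.const K0).add (MPrim.integral hI))).mul hab hΦ.transpose).congr hab
    (fun _ _ => rfl) fun t ht => ?_
  have h1 : Φ t * (Φ t)⁻¹ = 1 := Matrix.mul_nonsing_inv _ (hΦu t ht)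
  have h2 : ((Φ t)⁻¹)ᵀ * (Φ t)ᵀ = 1 := by rw [← transpose_mul, h1, transpose_one]
  have h3 : Φ t * ((Φ t)⁻¹ * V t * ((Φ t)⁻¹)ᵀ) * (Φ t)ᵀ = V t := by
    calc _ = (Φ t * (Φ t)⁻¹) * V t * (((Φ t)⁻¹)ᵀ * (Φ t)ᵀ) := by noncomm_ring
      _ = V t := by rw [h1, h2, Matrix.one_mul, Matrix.mul_one]
  simp only [transpose_mul, zero_add, Matrix.add_mul, h3, Matrix.mul_add]
  noncomm_ring

/-- The information Gramian of the `Π`-flow: `(ΩᵀΣΦ)' = -ΩᵀW(1 + ΠΣ)Φ = -ΩᵀWΩ(1 + Π(a)Σ(a))`,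
integrated from `t` to the terminal time, where `Σ` vanishes. -/
lemma gramian_mul (hab : a ≤ b) (hW : MatII W a b)
    (hWs : ∀ t ∈ Icc a b, (W t)ᵀ = W t) (hPs : ∀ t ∈ Icc a b, (P t)ᵀ = P t)
    (hS : MPrim S (fun t => -(S t * F t + (F t)ᵀ * S t - S t * V t * S t + W t)) a b)
    (hSb : S b = 0)
    (hΦ : MPrim Φ (fun t => (F t - V t * S t) * Φ t) a b)
    (hΩ : MPrim Ω (fun t => (F t - P t * W t) * Ω t) a b)
    (h : ∀ t ∈ Icc a b, (1 + P t * S t) * Φ t = Ω t * (1 + P a * S a)) :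
    ∀ t ∈ Icc a b, matInt (fun τ => (Ω τ)ᵀ * W τ * Ω τ) t b * (1 + P a * S a)
      = (Ω t)ᵀ * S t * Φ t := by
  intro t ht
  have hb : b ∈ Icc a b := ⟨hab, le_rfl⟩
  have hI : MatII (fun τ => (Ω τ)ᵀ * W τ * Ω τ) a b :=
    (hΩ.matContOn.transpose.cont_mul hab hW).mul_cont hab hΩ.matContOn
  have h1 : MPrim (fun t => (Ω t)ᵀ * S t * Φ t)
      (fun t => -(1 * ((Ω t)ᵀ * W t * Ω t) * (1 + P a * S a))) a b := by
    refine ((hΩ.transpose.mul hab hS).mul hab hΦ).congr hab (fun _ _ => rfl) fun t ht => ?_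
    rw [Matrix.one_mul, Matrix.mul_assoc _ (Ω t), ← h t ht]
    simp only [transpose_sub, transpose_mul, hWs t ht, hPs t ht]
    noncomm_ring
  have h2 := h1.neg.matInt_eq ht hb
  simp only [neg_neg, hSb] at h2
  rw [matInt_const_mul_mul hI _ _ ht hb] at h2
  simpa using h2

end Riccati

/-! ### Algebra of the relations `K N = Π` and `Λ M = Σ` -/

section Algebra

variable {n : ℕ} {P S K L h : Matrix (Fin n) (Fin n) ℝ}

lemma eq_of_mul_right_eq {X Y N : Matrix (Fin n) (Fin n) ℝ} (hN : IsUnit N.det)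
    (e : X * N = Y * N) : X = Y := by
  have := congrArg (· * N⁻¹) e
  simpa only [Matrix.mul_nonsing_inv_cancel_right _ _ hN] using this

lemma isUnit_det_one_add_symm (hu : IsUnit (1 + P * S).det) : IsUnit (1 + S * P).det := by
  rwa [Matrix.det_one_add_mul_comm]

/-- The initial covariance `Π₀^{1/2}(1 + Π₀^{1/2} Σ Π₀^{1/2})⁻¹ Π₀^{1/2}` is `Π₀(1 + ΣΠ₀)⁻¹`. -/
lemma init_mul_eq (hh : h * h = P) (hu : IsUnit (1 + P * S).det) :
    h * (1 + h * S * h)⁻¹ * h * (1 + S * P) = P := by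
  have hu' : IsUnit (1 + h * S * h).det := by
    rwa [Matrix.mul_assoc, Matrix.det_one_add_mul_comm, Matrix.mul_assoc, hh,
      Matrix.det_one_add_mul_comm]
  calc h * (1 + h * S * h)⁻¹ * h * (1 + S * P)
      = h * ((1 + h * S * h)⁻¹ * (1 + h * S * h)) * h := by rw [← hh]; noncomm_ring
    _ = P := by rw [Matrix.nonsing_inv_mul _ hu', Matrix.mul_one, hh]

lemma eq_sub_of_mul_eq (hu : IsUnit (1 + P * S).det) (hK : K * (1 + S * P) = P)
    (hL : L * (1 + P * S) = S) : K = P - P * L * P := by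
  refine eq_of_mul_right_eq (isUnit_det_one_add_symm hu) ?_
  calc K * (1 + S * P) = P + P * S * P - P * S * P := by rw [hK, add_sub_cancel_right]
    _ = P + P * S * P - P * (L * (1 + P * S)) * P := by rw [hL]
    _ = (P - P * L * P) * (1 + S * P) := by noncomm_ring

end Algebra

/-! ### The kernels on the diagonal -/

section Kernels

variable {n : ℕ} {a b : ℝ} {A V W : ℝ → Matrix (Fin n) (Fin n) ℝ}
  {Ψ : ℝ → ℝ → Matrix (Fin n) (Fin n) ℝ}

/-- The integral part of `K(t,t)`, with the initial point as base point of the flow. -/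
lemma IsTransition.covariance_eq (hΨ : IsTransition a b A Ψ) (hA : MatII A a b)
    (hV : MatII V a b) {t : ℝ} (ht : t ∈ Icc a b) :
    matInt (fun τ => Ψ t τ * V τ * (Ψ t τ)ᵀ) a t
      = Ψ t a * matInt (fun τ => (Ψ τ a)⁻¹ * V τ * ((Ψ τ a)⁻¹)ᵀ) a t * (Ψ t a)ᵀ := by
  have hab : a ≤ b := ht.1.trans ht.2
  have ha : a ∈ Icc a b := ⟨le_rfl, hab⟩
  have hc := matContOn_inv (hΨ.mprim ha).matContOn fun s hs => hΨ.isUnit_det hA hs ha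
  rw [← matInt_const_mul_mul ((hc.cont_mul hab hV).mul_cont hab hc.transpose) _ _ ha ht]
  refine matInt_congr ha ht fun τ hτ => ?_
  rw [hΨ.eq_mul_inv hA ht hτ ha, transpose_mul]
  noncomm_ring

/-- `Λ(t,t)` is congruent, through `Ψ(t,a)`, to the Gramian based at the initial point. -/
lemma IsTransition.information_eq (hΨ : IsTransition a b A Ψ) (hA : MatII A a b)
    (hW : MatII W a b) {t : ℝ} (ht : t ∈ Icc a b) :
    matInt (fun τ => (Ψ τ t)ᵀ * W τ * Ψ τ t) t b
      = ((Ψ t a)⁻¹)ᵀ * matInt (fun τ => (Ψ τ a)ᵀ * W τ * Ψ τ a) t b * (Ψ t a)⁻¹ := by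
  have hab : a ≤ b := ht.1.trans ht.2
  have ha : a ∈ Icc a b := ⟨le_rfl, hab⟩
  have hc := (hΨ.mprim ha).matContOn
  rw [← matInt_const_mul_mul ((hc.transpose.cont_mul hab hW).mul_cont hab hc) _ _ ht
    ⟨hab, le_rfl⟩]
  refine matInt_congr ht ⟨hab, le_rfl⟩ fun τ hτ => ?_
  rw [hΨ.eq_mul_inv hA hτ ht ha, transpose_mul]
  noncomm_ring

lemma IsTransition.information_posSemidef (hΨ : IsTransition a b A Ψ)
    (hW : MatII W a b) (hWp : ∀ t ∈ Icc a b, (W t).PosSemidef) {t : ℝ} (ht : t ∈ Icc a b) :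
    (matInt (fun τ => (Ψ τ t)ᵀ * W τ * Ψ τ t) t b).PosSemidef := by
  have hab : a ≤ b := ht.1.trans ht.2
  have hc := (hΨ.mprim ht).matContOn
  have hI := (hc.transpose.cont_mul hab hW).mul_cont hab hc
  refine matInt_posSemidef (fun i j => ii_mono (hI i j) ht ⟨hab, le_rfl⟩) ht.2 fun τ hτ => ?_
  have h1 := (hWp τ ⟨ht.1.trans hτ.1, hτ.2⟩).conjTranspose_mul_mul_same (Ψ τ t)
  rwa [conjTranspose_eq_transpose_of_trivial] at h1

end Kernels

/-! ### The identity on the diagonal -/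

/-- For `ΣT = 0`: `K(T,T|T) = Π(T)`, `K(t,t|T) = Π(t) - Π(t)Λ(t,t|T)Π(t)`, and
`K(t,t|T) ⪯ Π(t)` in the Loewner order. -/
theorem stmt12 {n m d : ℕ} (t0 T r : ℝ) (ht : t0 < T) (hr : 0 < r)
    (F : ℝ → Matrix (Fin n) (Fin n) ℝ) (G : ℝ → Matrix (Fin n) (Fin d) ℝ)
    (Q : ℝ → Matrix (Fin d) (Fin d) ℝ) (H : ℝ → Matrix (Fin m) (Fin n) ℝ)
    (R : ℝ → Matrix (Fin m) (Fin m) ℝ)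
    (hF : MatII F t0 T) (hG : MatL2 G t0 T) (hQ : MatII Q t0 T)
    (hQpsd : ∀ t ∈ Icc t0 T, (Q t).PosSemidef) (hH : MatL2 H t0 T) (hR : MatL2 R t0 T)
    (hRbd : ∀ t ∈ Icc t0 T, (R t - r • (1 : Matrix (Fin m) (Fin m) ℝ)).PosSemidef)
    (P0 : Matrix (Fin n) (Fin n) ℝ) (hP0 : P0.PosSemidef)
    (P0h : Matrix (Fin n) (Fin n) ℝ) (hP0h : P0h.PosSemidef ∧ P0h * P0h = P0)
    (Sg : ℝ → Matrix (Fin n) (Fin n) ℝ) (hSg : SolvesBackRiccati t0 T F G Q H R 0 Sg)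
    (Pm : ℝ → Matrix (Fin n) (Fin n) ℝ) (hPm : SolvesFwdRiccati t0 T F G Q H R P0 Pm)
    (PhiFS PhiFP : ℝ → ℝ → Matrix (Fin n) (Fin n) ℝ)
    (hPhiFS : IsTransition t0 T (fun τ => F τ - gqg G Q τ * Sg τ) PhiFS)
    (hPhiFP : IsTransition t0 T (fun τ => F τ - Pm τ * hrh H R τ) PhiFP) :
    Kker t0 G Q PhiFS Sg P0h T T = Pm T ∧
    ∀ t ∈ Icc t0 T,
      Kker t0 G Q PhiFS Sg P0h t t =
        Pm t - Pm t * matInt (fun τ => (PhiFP τ t)ᵀ * hrh H R τ * PhiFP τ t) (max t t) T * Pm t ∧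
      (Pm t - Kker t0 G Q PhiFS Sg P0h t t).PosSemidef := by
  have hab : t0 ≤ T := ht.le
  have ha : t0 ∈ Icc t0 T := ⟨le_rfl, hab⟩
  have hb : T ∈ Icc t0 T := ⟨hab, le_rfl⟩
  obtain ⟨hSc, hSi, hST, hSeq⟩ := hSg
  obtain ⟨hPc, hPi, hPa, hPeq⟩ := hPm
  have hWp : ∀ t ∈ Icc t0 T, (hrh H R t).PosSemidef := fun t h => hrh_posSemidef hr (hRbd t h)
  have hWs : ∀ t ∈ Icc t0 T, (hrh H R t)ᵀ = hrh H R t :=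
    fun t h => transpose_eq_of_posSemidef (hWp t h)
  have hVs : ∀ t ∈ Icc t0 T, (gqg G Q t)ᵀ = gqg G Q t :=
    fun t h => transpose_eq_of_posSemidef (gqg_posSemidef (hQpsd t h))
  have hW : MatII (hrh H R) t0 T := hrh_matII hab hr hH hR hRbd
  -- Integrability of `G Q Gᵀ` is read off from the forward Riccati equation: it is the only
  -- term of that equation not already known to be integrable.
  have hV : MatII (gqg G Q) t0 T := by
    refine (hPi.sub (((hF.mul_cont hab hPc).add (hPc.cont_mul hab hF.transpose)).sub
      ((hPc.cont_mul hab hW).mul_cont hab hPc))).congr hab fun t _ => ?_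
    abel
  have hP : MPrim Pm (fun t => F t * Pm t + Pm t * (F t)ᵀ - Pm t * hrh H R t * Pm t + gqg G Q t)
      t0 T := MPrim.of_base ha hPi fun s hs => by rw [hPa]; exact hPeq s hs
  have hS : MPrim Sg (fun t => -(Sg t * F t + (F t)ᵀ * Sg t - Sg t * gqg G Q t * Sg t + hrh H R t))
      t0 T := by
    refine MPrim.of_base hb hSi.neg fun s hs => ?_
    rw [hSeq s hs, hST]
    congr 1
    ext i j
    simp only [matInt, Matrix.of_apply, Matrix.neg_apply, intervalIntegral.integral_neg]
    exact intervalIntegral.integral_symm _ _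
  have hPs := fwd_riccati_symm hab hF hW hVs hWs hP
    (by rw [hPa]; exact transpose_eq_of_posSemidef hP0)
  have hSs := back_riccati_symm hab hF hV hVs hWs hS hST
  have hA := hF.sub (hV.mul_cont hab hSc)
  have hB := hF.sub (hPc.cont_mul hab hW)
  have hΦ := hPhiFS.mprim ha
  have hΩ := hPhiFP.mprim ha
  have hΦu : ∀ t ∈ Icc t0 T, IsUnit (PhiFS t t0).det := fun t h => hPhiFS.isUnit_det hA h ha
  have hΩu : ∀ t ∈ Icc t0 T, IsUnit (PhiFP t t0).det := fun t h => hPhiFP.isUnit_det hB h ha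
  have hM := intertwine hab hF hW hP hS hΦ hΩ (hPhiFS.self ha) (hPhiFP.self ha)
  have hMu := isUnit_one_add_mul hab hST hΦu hΩu hM
  have hK : ∀ t ∈ Icc t0 T, Kker t0 G Q PhiFS Sg P0h t t * (1 + Sg t * Pm t) = Pm t := by
    intro t h
    have hK0 : PhiFS t0 t0 * (P0h * (1 + P0h * Sg t0 * P0h)⁻¹ * P0h +
        matInt (fun τ => (PhiFS τ t0)⁻¹ * gqg G Q τ * ((PhiFS τ t0)⁻¹)ᵀ) t0 t0) * (PhiFS t0 t0)ᵀ
          * (1 + Sg t0 * Pm t0) = Pm t0 := by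
      have e : matInt (fun τ => (PhiFS τ t0)⁻¹ * gqg G Q τ * ((PhiFS τ t0)⁻¹)ᵀ) t0 t0 = 0 := by
        ext i j
        simp [matInt]
      rw [e, hPhiFS.self ha, add_zero, transpose_one, Matrix.one_mul, Matrix.mul_one]
      exact init_mul_eq (hP0h.2.trans hPa.symm) (hMu t0 ha)
    refine Eq.trans ?_ (lyapunov_mul_eq hab hF hV hW hVs hWs hPs hSs hP hS
      (lyapunov_rep hab hV hΦ hΦu (P0h * (1 + P0h * Sg t0 * P0h)⁻¹ * P0h)) hK0 t h)
    rw [Kker, min_self, hPhiFS.covariance_eq hA hV h]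
    congr 1
    simp only [Matrix.mul_add, Matrix.add_mul, Matrix.mul_assoc]
  have hL : ∀ t ∈ Icc t0 T, matInt (fun τ => (PhiFP τ t)ᵀ * hrh H R τ * PhiFP τ t) t T
      * (1 + Pm t * Sg t) = Sg t := by
    intro t h
    refine eq_of_mul_right_eq (hΦu t h) ?_
    have h1 := gramian_mul hab hW hWs hPs hS hST hΦ hΩ hM t h
    have h2 := Matrix.nonsing_inv_mul _ (hΩu t h)
    have h3 : ((PhiFP t t0)⁻¹)ᵀ * (PhiFP t t0)ᵀ = 1 := by
      rw [← transpose_mul, Matrix.mul_nonsing_inv _ (hΩu t h), transpose_one]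
    rw [Matrix.mul_assoc, hM t h, hPhiFP.information_eq hB hW h, Matrix.mul_assoc,
      ← Matrix.mul_assoc _ (PhiFP t t0), h2, Matrix.one_mul, Matrix.mul_assoc, h1,
      ← Matrix.mul_assoc, ← Matrix.mul_assoc, h3, Matrix.one_mul]
  have hE : ∀ t ∈ Icc t0 T, Kker t0 G Q PhiFS Sg P0h t t = Pm t
      - Pm t * matInt (fun τ => (PhiFP τ t)ᵀ * hrh H R τ * PhiFP τ t) t T * Pm t :=
    fun t h => eq_sub_of_mul_eq (hMu t h) (hK t h) (hL t h)
  refine ⟨?_, fun t h => ⟨?_, ?_⟩⟩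
  · simpa [hST] using hK T hb
  · rw [max_self]
    exact hE t h
  · have h1 := (hPhiFP.information_posSemidef hW hWp h).conjTranspose_mul_mul_same (Pm t)
    rw [conjTranspose_eq_transpose_of_trivial, hPs t h] at h1
    rwa [hE t h, sub_sub_cancel]

end SDEKernels
end
end

section
/- (Reproducing property of the trajectory kernel, in explicit control form.) Fix t ∈ [t0,T] and z ∈ ℝⁿ. Let χ solve -χ' = F*χ on [t0,t] with χ(t) = z, and let (x_{zt}, q_{zt}) solve x_{zt}' = Fx_{zt} - GQG*q_{zt} + GQG*χ·1_{τ<t}, -q_{zt}' = F*q_{zt} + H*R^{-1}Hx_{zt}, x_{zt}(t0) = -Π0 q_{zt}(t0) + Π0 χ(t0), q_{zt}(T) = ΣT x_{zt}(T). Define v_{zt}(τ) := -Q(τ)^{1/2}G*(τ)q_{zt}(τ) + Q(τ)^{1/2}G*(τ)χ(τ)·1_{τ<t} and ξ_{zt} := -Π0^{1/2}q_{zt}(t0) + Π0^{1/2}χ(t0). Then for every ξ ∈ ℝⁿ, every u ∈ L²([t0,T],ℝ^d), and the trajectory x solving x'(τ) = F(τ)x(τ) + G(τ)Q(τ)^{1/2}u(τ)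 with x(t0) = Π0^{1/2}ξ, one has ⟨ξ, ξ_{zt}⟩ + ⟨ΣT x(T), x_{zt}(T)⟩ + ∫_{t0}^T ⟨u(τ), v_{zt}(τ)⟩ dτ + ∫_{t0}^T ⟨H*(τ)R(τ)^{-1}H(τ)x(τ), x_{zt}(τ)⟩ dτ = ⟨z, x(t)⟩. -/
/-!
The identity is Lagrange's bilinear identity for the controlled trajectory `x`, paired once with
the costate `q` on `[t0, T]` and once with the adjoint solution `χ` on `[t0, t]`.

Since `x' = F x + G Q^{1/2} u` and `-q' = F* q + H* R⁻¹ H x_{zt}`, the `F`-terms in the derivative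
of `⟨x, q⟩` cancel, and integrating over `[t0, T]` gives
`⟨x(T), q(T)⟩ - ⟨x(t0), q(t0)⟩ = ∫ ⟨G Q^{1/2} u, q⟩ - ∫ ⟨x, H* R⁻¹ H x_{zt}⟩`.
In the same way, `-χ' = F* χ` gives
`⟨x(t), z⟩ - ⟨x(t0), χ(t0)⟩ = ∫_{t0}^t ⟨G Q^{1/2} u, χ⟩`.
Subtracting the first identity from the second and inserting `x(t0) = Π0^{1/2} ξ`,
`q(T) = ΣT x_{zt}(T)` and the symmetry of `Π0^{1/2}`, `ΣT`, `Q^{1/2}` and `H* R⁻¹ H` yields the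
claim.

Solutions are understood in the Carathéodory sense, so the product rule holds only almost
everywhere; `integral_pairing` integrates it through absolute continuity and Lebesgue
differentiation. Splitting the integrals requires `G Q^{1/2} u` and `H* R⁻¹ H x_{zt}` to be
integrable separately, which follows by subtracting the integrable terms `F x` and `F* q` from the
right-hand sides of the equations.
-/

open MeasureTheory Matrix Set Filter

noncomputable section

namespace SDEKernels

/-- Integration by parts for scalar functions given as primitives of integrable functions
(the Carathéodory sense): no pointwise differentiability is available, so the product rule holds
only almost everywhere and absolute continuity replaces the classical hypotheses. -/
theorem integral_scalar_parts {a b : ℝ} (hab : a ≤ b) {f g f' g' : ℝ → ℝ}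
    (hf' : IntervalIntegrable f' volume a b) (hg' : IntervalIntegrable g' volume a b)
    (hf : ∀ s ∈ Icc a b, f s = f a + ∫ τ in a..s, f' τ)
    (hg : ∀ s ∈ Icc a b, g s = g a + ∫ τ in a..s, g' τ) :
    ∫ τ in a..b, (f' τ * g τ + f τ * g' τ) = f b * g b - f a * g a := by
  have key : ∀ {k k' : ℝ → ℝ}, IntervalIntegrable k' volume a b →
      AbsolutelyContinuousOnInterval (fun s => k a + ∫ τ in a..s, k' τ) a b ∧
      ∀ᵐ s, s ∈ uIcc a b → HasDerivAt (fun s => k a + ∫ τ in a..s, k' τ) (k' s) s := by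
    intro k k' hk'
    refine ⟨?_, ?_⟩
    · have hc : AbsolutelyContinuousOnInterval (fun _ : ℝ => k a) a b :=
        (LipschitzWith.const (k a)).lipschitzOnWith.absolutelyContinuousOnInterval
      exact hc.fun_add (hk'.absolutelyContinuousOnInterval_intervalIntegral left_mem_uIcc)
    · filter_upwards [hk'.ae_hasDerivAt_integral] with s hs hmem
      exact (hs hmem a left_mem_uIcc).const_add (k a)
  obtain ⟨hfac, hfd⟩ := key (k := f) hf'
  obtain ⟨hgac, hgd⟩ := key (k := g) hg'
  have h := hfac.integral_deriv_mul_eq_sub hgac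
  rw [← hf b (right_mem_Icc.2 hab), ← hg b (right_mem_Icc.2 hab)] at h
  simp only [intervalIntegral.integral_same, add_zero] at h
  rw [← h]
  apply intervalIntegral.integral_congr_ae
  filter_upwards [hfd, hgd] with s hs1 hs2 hs
  have hs' : s ∈ uIcc a b := uIoc_subset_uIcc hs
  rw [(hs1 hs').deriv, (hs2 hs').deriv]
  rw [uIcc_of_le hab] at hs'
  rw [hf s hs', hg s hs']

theorem intervalIntegrable_apply {n : ℕ} {a b : ℝ} {X : ℝ → Fin n → ℝ}
    (hX : IntervalIntegrable X volume a b) (i : Fin n) :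
    IntervalIntegrable (fun τ => X τ i) volume a b :=
  ⟨hX.1.eval i, hX.2.eval i⟩

theorem intervalIntegral_apply {n : ℕ} {a b : ℝ} {X : ℝ → Fin n → ℝ}
    (hX : IntervalIntegrable X volume a b) (i : Fin n) :
    (∫ τ in a..b, X τ) i = ∫ τ in a..b, X τ i :=
  ((ContinuousLinearMap.proj (R := ℝ) (φ := fun _ : Fin n => ℝ) i).intervalIntegral_comp_comm
    hX).symm

theorem intervalIntegrable_dotProduct {n : ℕ} {a b : ℝ} (hab : a ≤ b) {X y : ℝ → Fin n → ℝ}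
    (hX : IntervalIntegrable X volume a b) (hy : ContinuousOn y (Icc a b)) :
    IntervalIntegrable (fun τ => X τ ⬝ᵥ y τ) volume a b := by
  have h := IntervalIntegrable.sum (μ := volume) (a := a) (b := b) Finset.univ
    (f := fun (i : Fin n) τ => X τ i * y τ i) fun i _ =>
      (intervalIntegrable_apply hX i).mul_continuousOn
        (by rw [uIcc_of_le hab]; exact continuousOn_pi.1 hy i)
  simpa only [dotProduct, Finset.sum_fn] using h

theorem MatII.mulVec {n : ℕ} {a b : ℝ} (hab : a ≤ b) {A : ℝ → Matrix (Fin n) (Fin n) ℝ}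
    {x : ℝ → Fin n → ℝ} (hA : MatII A a b) (hx : ContinuousOn x (Icc a b)) :
    IntervalIntegrable (fun τ => A τ *ᵥ x τ) volume a b := by
  have h : ∀ i, IntervalIntegrable (fun τ => (A τ *ᵥ x τ) i) volume a b := fun i => by
    have h := IntervalIntegrable.sum (μ := volume) (a := a) (b := b) Finset.univ
      (f := fun (j : Fin n) τ => A τ i j * x τ j) fun j _ =>
        (hA i j).mul_continuousOn
          (by rw [uIcc_of_le hab]; exact continuousOn_pi.1 hx j)
    simpa only [Matrix.mulVec, dotProduct, Finset.sum_fn] using h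
  exact ⟨Integrable.of_eval fun i => (h i).1, Integrable.of_eval fun i => (h i).2⟩

theorem MatII.transpose_s14 {n : ℕ} {a b : ℝ} {A : ℝ → Matrix (Fin n) (Fin n) ℝ}
    (hA : MatII A a b) : MatII (fun τ => (A τ)ᵀ) a b := fun i j => hA j i

/-- Integration by parts for the pairing `⟨x, y⟩` when `x` is given as a forward primitive of `X`
and `y` as a backward primitive of `Y`, that is, `x' = X` and `-y' = Y`. -/
theorem integral_pairing {n : ℕ} {a b : ℝ} (hab : a ≤ b) {x y X Y : ℝ → Fin n → ℝ}
    (hxc : ContinuousOn x (Icc a b)) (hyc : ContinuousOn y (Icc a b))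
    (hX : IntervalIntegrable X volume a b) (hY : IntervalIntegrable Y volume a b)
    (hx : ∀ s ∈ Icc a b, x s = x a + ∫ τ in a..s, X τ)
    (hy : ∀ s ∈ Icc a b, y s = y b + ∫ τ in s..b, Y τ) :
    ∫ τ in a..b, (X τ ⬝ᵥ y τ - x τ ⬝ᵥ Y τ) = x b ⬝ᵥ y b - x a ⬝ᵥ y a := by
  have hsub : ∀ s ∈ Icc a b, uIcc a s ⊆ uIcc a b := fun s hs =>
    uIcc_subset_uIcc left_mem_uIcc (by rwa [uIcc_of_le hab])
  have hsub' : ∀ s ∈ Icc a b, uIcc s b ⊆ uIcc a b := fun s hs =>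
    uIcc_subset_uIcc (by rwa [uIcc_of_le hab]) right_mem_uIcc
  have hcomp : ∀ i, ∫ τ in a..b, (X τ i * y τ i + x τ i * -Y τ i)
      = x b i * y b i - x a i * y a i := fun i => by
    refine integral_scalar_parts hab (f := fun τ => x τ i) (g := fun τ => y τ i)
      (intervalIntegrable_apply hX i) (intervalIntegrable_apply hY i).neg (fun s hs => ?_)
      (fun s hs => ?_)
    · simp only [hx s hs, Pi.add_apply, intervalIntegral_apply (hX.mono_set (hsub s hs))]
    · have h1 := congrFun (hy s hs) i
      have h2 := congrFun (hy a (left_mem_Icc.2 hab)) i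
      rw [Pi.add_apply, intervalIntegral_apply (hY.mono_set (hsub' s hs))] at h1
      rw [Pi.add_apply, intervalIntegral_apply hY] at h2
      have h3 := intervalIntegral.integral_add_adjacent_intervals
        (intervalIntegrable_apply (hY.mono_set (hsub s hs)) i)
        (intervalIntegrable_apply (hY.mono_set (hsub' s hs)) i)
      simp only [intervalIntegral.integral_neg]
      linarith
  have hint : ∀ i ∈ Finset.univ, IntervalIntegrable
      (fun τ => X τ i * y τ i + x τ i * -Y τ i) volume a b := fun i _ =>
    ((intervalIntegrable_apply hX i).mul_continuousOn
        (by rw [uIcc_of_le hab]; exact continuousOn_pi.1 hyc i)).add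
      ((intervalIntegrable_apply hY i).neg.continuousOn_mul
        (by rw [uIcc_of_le hab]; exact continuousOn_pi.1 hxc i))
  have hsum := intervalIntegral.integral_finsetSum hint
  simp only [hcomp] at hsum
  simp only [dotProduct, ← Finset.sum_sub_distrib]
  rw [← hsum]
  simp only [sub_eq_add_neg, mul_neg]

/-- Cutting an integrand off at `t` cuts the interval of integration; the value at `t` itself is
irrelevant. Integrability on the whole interval is part of the conclusion. -/
theorem integral_cutoff {a b t : ℝ} (ht : t ∈ Icc a b) {f : ℝ → ℝ}
    (hf : IntervalIntegrable f volume a t) :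
    IntervalIntegrable (fun τ => if τ < t then f τ else 0) volume a b ∧
    ∫ τ in a..b, (if τ < t then f τ else 0) = ∫ τ in a..t, f τ := by
  have e1 : ∀ᵐ τ, τ ∈ uIoc a t → f τ = if τ < t then f τ else 0 := by
    filter_upwards [Measure.ae_ne volume t] with τ hτ hm
    rw [uIoc_of_le ht.1] at hm
    rw [if_pos (lt_of_le_of_ne hm.2 hτ)]
  have e2 : ∀ τ ∈ uIoc t b, (0 : ℝ) = if τ < t then f τ else 0 := fun τ hm => by
    rw [uIoc_of_le ht.2] at hm
    rw [if_neg (not_lt.2 hm.1.le)]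
  have i1 : IntervalIntegrable (fun τ => if τ < t then f τ else 0) volume a t :=
    hf.congr_ae ((ae_restrict_iff' measurableSet_uIoc).2 e1)
  have i2 : IntervalIntegrable (fun τ => if τ < t then f τ else 0) volume t b :=
    (intervalIntegrable_const (c := (0 : ℝ))).congr e2
  refine ⟨i1.trans i2, ?_⟩
  rw [← intervalIntegral.integral_add_adjacent_intervals i1 i2,
    ← intervalIntegral.integral_congr_ae e1,
    ← intervalIntegral.integral_congr_ae (Eventually.of_forall e2)]
  simp

theorem isSymm_hrh {n m : ℕ} (H : ℝ → Matrix (Fin m) (Fin n) ℝ)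
    (R : ℝ → Matrix (Fin m) (Fin m) ℝ) {r τ : ℝ}
    (hR : (R τ - r • (1 : Matrix (Fin m) (Fin m) ℝ)).PosSemidef) : (hrh H R τ)ᵀ = hrh H R τ := by
  have h : (R τ)ᵀ = R τ := by
    have h := hR.1.eq
    simpa [conjTranspose_eq_transpose_of_trivial, transpose_sub, transpose_smul] using h
  simp only [hrh, transpose_mul, transpose_transpose, transpose_nonsing_inv, h, Matrix.mul_assoc]

theorem dotProduct_mulVec_transpose {p q : ℕ} (A : Matrix (Fin p) (Fin q) ℝ) (v : Fin q → ℝ)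
    (w : Fin p → ℝ) : (A *ᵥ v) ⬝ᵥ w = v ⬝ᵥ (Aᵀ *ᵥ w) := by
  rw [mulVec_transpose, dotProduct_comm, dotProduct_mulVec, dotProduct_comm]

/-- The reproducing property of the trajectory kernel, in explicit control form. -/
theorem stmt14 {n m d : ℕ} (t0 T r : ℝ) (ht : t0 < T) (hr : 0 < r)
    (F : ℝ → Matrix (Fin n) (Fin n) ℝ) (G : ℝ → Matrix (Fin n) (Fin d) ℝ)
    (Q : ℝ → Matrix (Fin d) (Fin d) ℝ) (H : ℝ → Matrix (Fin m) (Fin n) ℝ)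
    (R : ℝ → Matrix (Fin m) (Fin m) ℝ)
    (hF : MatII F t0 T) (hG : MatL2 G t0 T) (hQ : MatII Q t0 T)
    (hQpsd : ∀ t ∈ Icc t0 T, (Q t).PosSemidef) (hH : MatL2 H t0 T) (hR : MatL2 R t0 T)
    (hRbd : ∀ t ∈ Icc t0 T, (R t - r • (1 : Matrix (Fin m) (Fin m) ℝ)).PosSemidef)
    (P0 ST : Matrix (Fin n) (Fin n) ℝ) (hP0 : P0.PosSemidef) (hST : ST.PosSemidef)
    (P0h : Matrix (Fin n) (Fin n) ℝ) (hP0h : P0h.PosSemidef ∧ P0h * P0h = P0)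
    (Qh : ℝ → Matrix (Fin d) (Fin d) ℝ)
    (hQh : ∀ τ ∈ Icc t0 T, (Qh τ).PosSemidef ∧ Qh τ * Qh τ = Q τ)
    (t : ℝ) (htt : t ∈ Icc t0 T) (z : Fin n → ℝ)
    (χ : ℝ → Fin n → ℝ) (hχ : SolvesChi t0 t F z χ)
    (xzt qzt : ℝ → Fin n → ℝ) (hxq : SolvesImpulseSystem t0 T t F G Q H R P0 ST χ xzt qzt)
    (ξ : Fin n → ℝ) (u : ℝ → Fin d → ℝ) (hu : VecL2 u t0 T)
    (x : ℝ → Fin n → ℝ) (hx : SolvesControlODE t0 T F G Qh P0h ξ u x) :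
    dotProduct ξ (-(P0h.mulVec (qzt t0)) + P0h.mulVec (χ t0)) +
      dotProduct (ST.mulVec (x T)) (xzt T) +
      (∫ τ in t0..T, dotProduct (u τ)
        (-((Qh τ * (G τ)ᵀ).mulVec (qzt τ)) +
          (if τ < t then (Qh τ * (G τ)ᵀ).mulVec (χ τ) else 0))) +
      (∫ τ in t0..T, dotProduct ((hrh H R τ).mulVec (x τ)) (xzt τ)) =
      dotProduct z (x t) := by
  obtain ⟨hxc, hxi, hx0, hx⟩ := hx
  obtain ⟨-, hqc, -, hqi, -, hq, -, hqT⟩ := hxq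
  obtain ⟨hχc, hχi, rfl, hχ⟩ := hχ
  have hP0T : P0hᵀ = P0h := by simpa using hP0h.1.1.eq
  have hSTT : STᵀ = ST := by simpa using hST.1.eq
  have hT := ht.le
  have hsub : Icc t0 t ⊆ Icc t0 T := Icc_subset_Icc_right htt.2
  have hset : uIcc t0 t ⊆ uIcc t0 T :=
    uIcc_subset_uIcc left_mem_uIcc (by rwa [uIcc_of_le hT])
  -- Subtracting the integrable drifts `F x` and `F* q` shows that the control input and the
  -- forcing term are integrable by themselves.
  have hg : IntervalIntegrable (fun τ => (G τ * Qh τ) *ᵥ u τ) volume t0 T := by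
    simpa using hxi.sub (hF.mulVec hT hxc)
  have hh : IntervalIntegrable (fun τ => hrh H R τ *ᵥ xzt τ) volume t0 T := by
    simpa using hqi.sub (hF.transpose_s14.mulVec hT hqc)
  have hgq := intervalIntegrable_dotProduct hT hg hqc
  have hhx := intervalIntegrable_dotProduct hT hh hxc
  have hgχ := intervalIntegrable_dotProduct htt.1 (hg.mono_set hset) hχc
  have hA := integral_pairing hT hxc hqc hxi hqi hx hq
  have hB := integral_pairing htt.1 (hxc.mono hsub) hχc (hxi.mono_set hset) hχi
    (fun s hs => hx s (hsub hs)) hχ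
  have eA : ∫ τ in t0..T, ((F τ *ᵥ x τ + (G τ * Qh τ) *ᵥ u τ) ⬝ᵥ qzt τ
        - x τ ⬝ᵥ ((F τ)ᵀ *ᵥ qzt τ + hrh H R τ *ᵥ xzt τ))
      = (∫ τ in t0..T, ((G τ * Qh τ) *ᵥ u τ) ⬝ᵥ qzt τ)
        - ∫ τ in t0..T, (hrh H R τ *ᵥ xzt τ) ⬝ᵥ x τ := by
    rw [← intervalIntegral.integral_sub hgq hhx]
    refine intervalIntegral.integral_congr fun τ _ => ?_
    simp only [add_dotProduct, dotProduct_add, dotProduct_mulVec_transpose (F τ),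
      dotProduct_comm (x τ) (hrh H R τ *ᵥ xzt τ)]
    ring
  have eB : ∫ τ in t0..t, ((F τ *ᵥ x τ + (G τ * Qh τ) *ᵥ u τ) ⬝ᵥ χ τ
        - x τ ⬝ᵥ ((F τ)ᵀ *ᵥ χ τ))
      = ∫ τ in t0..t, ((G τ * Qh τ) *ᵥ u τ) ⬝ᵥ χ τ := by
    refine intervalIntegral.integral_congr fun τ _ => ?_
    simp only [add_dotProduct, dotProduct_mulVec_transpose (F τ)]
    ring
  have eC : ∫ τ in t0..T, u τ ⬝ᵥ (-((Qh τ * (G τ)ᵀ) *ᵥ qzt τ) +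
        (if τ < t then (Qh τ * (G τ)ᵀ) *ᵥ χ τ else 0))
      = -(∫ τ in t0..T, ((G τ * Qh τ) *ᵥ u τ) ⬝ᵥ qzt τ)
        + ∫ τ in t0..t, ((G τ * Qh τ) *ᵥ u τ) ⬝ᵥ χ τ := by
    obtain ⟨hci, hc⟩ := integral_cutoff htt hgχ
    have hgq' : IntervalIntegrable (fun τ => -(((G τ * Qh τ) *ᵥ u τ) ⬝ᵥ qzt τ)) volume t0 T :=
      hgq.neg
    rw [← hc, ← intervalIntegral.integral_neg, ← intervalIntegral.integral_add hgq' hci]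
    refine intervalIntegral.integral_congr fun τ hτ => ?_
    rw [uIcc_of_le hT] at hτ
    have hs : (Qh τ)ᵀ = Qh τ := by simpa using (hQh τ hτ).1.1.eq
    simp only [dotProduct_mulVec_transpose (G τ * Qh τ), transpose_mul, hs, dotProduct_add,
      dotProduct_neg]
    split_ifs <;> simp
  have eD : ∫ τ in t0..T, (hrh H R τ *ᵥ x τ) ⬝ᵥ xzt τ
      = ∫ τ in t0..T, (hrh H R τ *ᵥ xzt τ) ⬝ᵥ x τ := by
    refine intervalIntegral.integral_congr fun τ hτ => ?_
    rw [uIcc_of_le hT] at hτ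
    rw [dotProduct_mulVec_transpose, isSymm_hrh H R (hRbd τ hτ), dotProduct_comm]
  have e0 : ξ ⬝ᵥ (-(P0h *ᵥ qzt t0) + P0h *ᵥ χ t0)
      = -(x t0 ⬝ᵥ qzt t0) + x t0 ⬝ᵥ χ t0 := by
    simp only [hx0, dotProduct_mulVec_transpose P0h, hP0T, dotProduct_add, dotProduct_neg]
  have eT : (ST *ᵥ x T) ⬝ᵥ xzt T = x T ⬝ᵥ qzt T := by
    rw [dotProduct_mulVec_transpose, hSTT, hqT]
  rw [eA] at hA
  rw [eB] at hB
  rw [e0, eT, eC, eD, dotProduct_comm (χ t)]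
  linarith

end SDEKernels
end
end
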